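/- For every maximal cap S in AG(4,3), the number of cap-partitions of AG(4,3) containing S as one of their four caps is exactly 216; moreover, every maximal cap disjoint from S occurs together with S in at least one of these 216 cap-partitions. -/

import Mathlib

/-- A cap in `AG(n,3)`: a finite set of points of `Fin n → ZMod 3` containing no
three distinct collinear points (three distinct points are collinear iff they sum to zero). -/
def IsCap {n : ℕ} (C : Finset (Fin n → ZMod 3)) : Prop :=
  ∀ x ∈ C, ∀ y ∈ C, ∀ z ∈ C, x ≠ y → x ≠ z → y ≠ z → x + y + z ≠ 0

/-- A maximal cap: a cap of largest possible size. -/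
def MaximalCap {n : ℕ} (C : Finset (Fin n → ZMod 3)) : Prop :=
  IsCap C ∧ ∀ D : Finset (Fin n → ZMod 3), IsCap D → D.card ≤ C.card

/-- A cap-partition of `AG(4,3)`: an unordered set of four pairwise disjoint maximal caps
whose union is the complement of a single point. -/
def IsCapPartition (P : Finset (Finset (Fin 4 → ZMod 3))) : Prop :=
  P.card = 4 ∧ (∀ C ∈ P, MaximalCap C) ∧
  (∀ C ∈ P, ∀ D ∈ P, C ≠ D → Disjoint C D) ∧
  ∃ a : Fin 4 → ZMod 3, P.sup id = Finset.univ \ {a}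

/-!
For a cap `S` in `AG(n,3)`, the numbers of points of `S` on the hyperplanes have a known second
moment, and a known third moment as well, since `x + y + z = 0` only has the trivial solutions in
`S`. These moments bound the size of a cap in dimensions `2`, `3` and `4` by `4`, `9` and `20`, and
they show that a cap of size `9` or `20` has parallel layers of sizes `(1, 4, 4)` or `(2, 9, 9)`.
Hence a cap of size `9` is an elliptic paraboloid, and a cap of size `20` is a cone over an elliptic
quadric of `PG(3,3)` without its vertex, the anchor of the cap.

Two disjoint maximal caps have the same anchor: reflections of the first cap move the anchor of the
second to one of few points, where an enumeration of quadratic forms excludes it. So the maximal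
caps disjoint from `S` are the zero sets of quadratic forms, which can be listed. As four disjoint
maximal caps cover all but one of the `81` points, the cap-partitions containing `S` correspond to
the triples of pairwise disjoint caps in this list.
-/

open Finset

section Counting

variable {n : ℕ}

theorem add_add_self_eq_zero (x : Fin n → ZMod 3) : x + x + x = 0 := by
  ext i
  have : ∀ a : ZMod 3, a + a + a = 0 := by decide
  exact this (x i)

theorem three_mul_card_dotProduct_eq_zero (v : Fin n → ZMod 3) :
    3 * #{w : Fin n → ZMod 3 | w ⬝ᵥ v = 0} = 3 ^ n * if v = 0 then 3 else 1 := by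
  split_ifs with hv
  · simp [hv, mul_comm]
  obtain ⟨i, hi⟩ := Function.ne_iff.1 hv
  have fiber (c : ZMod 3) :
      #{w : Fin n → ZMod 3 | w ⬝ᵥ v = c} = #{w : Fin n → ZMod 3 | w ⬝ᵥ v = 0} := by
    refine card_equiv (Equiv.subRight (Pi.single i (c / v i))) fun w => ?_
    simp [sub_dotProduct, div_mul_cancel₀ c hi, sub_eq_zero]
  have total := card_eq_sum_card_fiberwise (s := (univ : Finset (Fin n → ZMod 3)))
    (f := (· ⬝ᵥ v)) (t := univ) fun _ _ => mem_coe.2 (mem_univ _)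
  simp only [fiber] at total
  simpa using total.symm

theorem three_mul_sum_card_dotProduct_eq_zero {ι : Type*} (s : Finset ι)
    (v : ι → Fin n → ZMod 3) :
    3 * ∑ w : Fin n → ZMod 3, #{i ∈ s | w ⬝ᵥ v i = 0} = 3 ^ n * (#s + 2 * #{i ∈ s | v i = 0}) := by
  have swap : ∑ w : Fin n → ZMod 3, #{i ∈ s | w ⬝ᵥ v i = 0} =
      ∑ i ∈ s, #{w : Fin n → ZMod 3 | w ⬝ᵥ v i = 0} :=
    sum_card_bipartiteAbove_eq_sum_card_bipartiteBelow _
  have weight (i : ι) : (if v i = 0 then 3 else 1) = 1 + 2 * if v i = 0 then 1 else 0 := by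
    split_ifs <;> rfl
  simp only [swap, mul_sum, three_mul_card_dotProduct_eq_zero, weight]
  rw [← mul_sum, sum_add_distrib, ← mul_sum, card_filter, card_eq_sum_ones]

/-- The number of points of `S` on the hyperplane `w ⬝ᵥ x = c`. -/
def hyperplaneCard (S : Finset (Fin n → ZMod 3)) (w : Fin n → ZMod 3) (c : ZMod 3) : ℕ :=
  #{x ∈ S | w ⬝ᵥ x = c}

theorem hyperplaneCard_add_add (S : Finset (Fin n → ZMod 3)) (w : Fin n → ZMod 3) :
    hyperplaneCard S w 0 + hyperplaneCard S w 1 + hyperplaneCard S w 2 = #S := by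
  rw [card_eq_sum_card_fiberwise (f := (w ⬝ᵥ ·)) (t := univ) fun _ _ => mem_coe.2 (mem_univ _)]
  exact (Fin.sum_univ_three _).symm

theorem hyperplaneCard_zero_left (S : Finset (Fin n → ZMod 3)) (c : ZMod 3) :
    hyperplaneCard S 0 c = if c = 0 then #S else 0 := by
  split_ifs with hc <;> simp [hyperplaneCard, hc, eq_comm]

/-- Double counting of the pairs `x, y ∈ S` with `w ⬝ᵥ x = w ⬝ᵥ y`. -/
theorem sum_hyperplaneCard_sq (S : Finset (Fin n → ZMod 3)) :
    3 * ∑ w, (hyperplaneCard S w 0 ^ 2 + hyperplaneCard S w 1 ^ 2 + hyperplaneCard S w 2 ^ 2) =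
      3 ^ n * (#S ^ 2 + 2 * #S) := by
  have pairs (w : Fin n → ZMod 3) :
      hyperplaneCard S w 0 ^ 2 + hyperplaneCard S w 1 ^ 2 + hyperplaneCard S w 2 ^ 2 =
        #{p ∈ S ×ˢ S | w ⬝ᵥ (p.1 - p.2) = 0} := by
    have indicator : ∀ a b : ZMod 3, (if a - b = 0 then 1 else 0) =
        (if a = 0 then 1 else 0) * (if b = 0 then 1 else 0) +
        (if a = 1 then 1 else 0) * (if b = 1 then 1 else 0) +
        (if a = 2 then 1 else 0) * if b = 2 then 1 else 0 := by decide
    simp only [hyperplaneCard, card_filter, sum_product, dotProduct_sub, indicator,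
      sum_add_distrib, sq, sum_mul_sum]
  have diagonal : #{p ∈ S ×ˢ S | p.1 - p.2 = 0} = #S := by
    rw [← diag_card S]
    exact congr_arg card (by ext ⟨x, y⟩; simp +contextual [sub_eq_zero])
  simp only [pairs]
  rw [three_mul_sum_card_dotProduct_eq_zero, diagonal, card_product, sq]

theorem IsCap.eq_of_add_add_eq_zero {S : Finset (Fin n → ZMod 3)} (hS : IsCap S)
    {x y z : Fin n → ZMod 3} (hx : x ∈ S) (hy : y ∈ S) (hz : z ∈ S) (h : x + y + z = 0) :
    x = y ∧ x = z := by
  have third (u v : Fin n → ZMod 3) (huv : u + u + v = 0) : u = v :=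
    add_left_cancel (a := u + u) ((add_add_self_eq_zero u).trans huv.symm)
  by_cases hxy : x = y
  · exact ⟨hxy, third x z (by rwa [← hxy] at h)⟩
  by_cases hxz : x = z
  · exact absurd (third x y (by rwa [← hxz, add_right_comm] at h)) hxy
  by_cases hyz : y = z
  · exact absurd (third y x (by rwa [← hyz, add_comm, ← add_assoc, add_right_comm] at h)).symm hxy
  exact absurd h (hS x hx y hy z hz hxy hxz hyz)

theorem IsCap.card_filter_add_add_eq_zero {S : Finset (Fin n → ZMod 3)} (hS : IsCap S) :
    #{p ∈ S ×ˢ S ×ˢ S | p.1 + (p.2.1 + p.2.2) = 0} = #S := by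
  have diagonal : {p ∈ S ×ˢ S ×ˢ S | p.1 + (p.2.1 + p.2.2) = 0} = S.image fun x => (x, x, x) := by
    ext ⟨x, y, z⟩
    simp only [mem_filter, mem_product, mem_image, Prod.mk.injEq]
    constructor
    · rintro ⟨⟨hx, hy, hz⟩, h⟩
      obtain ⟨rfl, rfl⟩ := hS.eq_of_add_add_eq_zero hx hy hz (by rwa [add_assoc])
      exact ⟨x, hx, rfl, rfl, rfl⟩
    · rintro ⟨u, hu, rfl, rfl, rfl⟩
      exact ⟨⟨hu, hu, hu⟩, by rw [← add_assoc, add_add_self_eq_zero]⟩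
  rw [diagonal, card_image_of_injective _ fun x y h => congr_arg Prod.fst h]

/-- Double counting of the triples `x, y, z ∈ S` with `w ⬝ᵥ (x + y + z) = 0`. -/
theorem IsCap.sum_hyperplaneCard_cube {S : Finset (Fin n → ZMod 3)} (hS : IsCap S) :
    3 * ∑ w, (hyperplaneCard S w 0 ^ 3 + hyperplaneCard S w 1 ^ 3 + hyperplaneCard S w 2 ^ 3 +
      6 * (hyperplaneCard S w 0 * hyperplaneCard S w 1 * hyperplaneCard S w 2)) =
      3 ^ n * (#S ^ 3 + 2 * #S) := by
  have triples (w : Fin n → ZMod 3) :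
      hyperplaneCard S w 0 ^ 3 + hyperplaneCard S w 1 ^ 3 + hyperplaneCard S w 2 ^ 3 +
        6 * (hyperplaneCard S w 0 * hyperplaneCard S w 1 * hyperplaneCard S w 2) =
        #{p ∈ S ×ˢ S ×ˢ S | w ⬝ᵥ (p.1 + (p.2.1 + p.2.2)) = 0} := by
    let δ (c a : ZMod 3) : ℕ := if a = c then 1 else 0
    have indicator : ∀ a b c : ZMod 3, (if a + (b + c) = 0 then 1 else 0) =
        δ 0 a * (δ 0 b * δ 0 c + δ 1 b * δ 2 c + δ 2 b * δ 1 c) +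
        δ 1 a * (δ 1 b * δ 1 c + δ 0 b * δ 2 c + δ 2 b * δ 0 c) +
        δ 2 a * (δ 2 b * δ 2 c + δ 0 b * δ 1 c + δ 1 b * δ 0 c) := by decide
    have count (c : ZMod 3) : hyperplaneCard S w c = ∑ x ∈ S, δ c (w ⬝ᵥ x) := card_filter _ _
    simp only [card_filter, sum_product, dotProduct_add, indicator, sum_add_distrib, ← mul_sum,
      ← sum_mul, ← count]
    ring
  simp only [triples]
  rw [three_mul_sum_card_dotProduct_eq_zero, hS.card_filter_add_add_eq_zero, card_product,
    card_product]
  ring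

end Counting

section Collineations

variable {n : ℕ}

/-- The affine automorphisms of `AG(n,3)`: since lines are the triples of distinct points with
zero sum, these are the bijections preserving zero sums of triples. -/
def IsCollineation (e : (Fin n → ZMod 3) ≃ (Fin n → ZMod 3)) : Prop :=
  ∀ x y z, x + y + z = 0 ↔ e x + e y + e z = 0

theorem IsCollineation.symm {e : (Fin n → ZMod 3) ≃ (Fin n → ZMod 3)} (he : IsCollineation e) :
    IsCollineation e.symm := fun x y z => by
  simpa using (he (e.symm x) (e.symm y) (e.symm z)).symm

theorem IsCollineation.trans {e f : (Fin n → ZMod 3) ≃ (Fin n → ZMod 3)} (he : IsCollineation e)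
    (hf : IsCollineation f) : IsCollineation (e.trans f) := fun _ _ _ =>
  (he _ _ _).trans (hf _ _ _)

theorem isCollineation_of_map_add_add {e : (Fin n → ZMod 3) ≃ (Fin n → ZMod 3)}
    (he : ∀ x y z, x + y + z = 0 → e x + e y + e z = 0) : IsCollineation e := fun x y z => by
  refine ⟨he x y z, fun h => ?_⟩
  have third : e x + e y + e (-(x + y)) = 0 := he _ _ _ (add_neg_cancel _)
  rw [e.injective (add_left_cancel (h.trans third.symm)), add_neg_cancel]

theorem isCollineation_addRight (v : Fin n → ZMod 3) : IsCollineation (Equiv.addRight v) :=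
  isCollineation_of_map_add_add fun x y z h => by
    calc x + v + (y + v) + (z + v) = (x + y + z) + (v + v + v) := by abel
      _ = 0 := by rw [h, add_add_self_eq_zero, add_zero]

theorem exists_isCollineation_of_injective (f : (Fin n → ZMod 3) →ₗ[ZMod 3] Fin n → ZMod 3)
    (hf : Function.Injective f) :
    ∃ e : (Fin n → ZMod 3) ≃ (Fin n → ZMod 3), IsCollineation e ∧ ∀ x, e x = f x :=
  ⟨Equiv.ofBijective f hf.bijective_of_finite, isCollineation_of_map_add_add fun x y z h => by
    simp [← map_add, h], fun _ => rfl⟩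

/-- Equivalence of point sets under affine automorphisms. -/
def AffinelyEquivalent (S T : Finset (Fin n → ZMod 3)) : Prop :=
  ∃ e : (Fin n → ZMod 3) ≃ (Fin n → ZMod 3), IsCollineation e ∧ ∀ x, x ∈ S ↔ e x ∈ T

namespace AffinelyEquivalent

variable {S T U : Finset (Fin n → ZMod 3)}

theorem symm (h : AffinelyEquivalent S T) : AffinelyEquivalent T S := by
  obtain ⟨e, he, hST⟩ := h
  exact ⟨e.symm, he.symm, fun x => by simp [hST]⟩

theorem trans (h : AffinelyEquivalent S T) (h' : AffinelyEquivalent T U) :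
    AffinelyEquivalent S U := by
  obtain ⟨e, he, hST⟩ := h
  obtain ⟨f, hf, hTU⟩ := h'
  exact ⟨e.trans f, he.trans hf, fun x => (hST x).trans (hTU _)⟩

theorem map {e : (Fin n → ZMod 3) ≃ (Fin n → ZMod 3)} (he : IsCollineation e)
    (S : Finset (Fin n → ZMod 3)) : AffinelyEquivalent S (S.map e.toEmbedding) :=
  ⟨e, he, fun x => by simp⟩

theorem card_eq (h : AffinelyEquivalent S T) : #S = #T := by
  obtain ⟨e, -, hST⟩ := h
  exact card_equiv e hST

theorem isCap (h : AffinelyEquivalent S T) (hS : IsCap S) : IsCap T := by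
  obtain ⟨e, he, hTS⟩ := h.symm
  exact fun x hx y hy z hz hxy hxz hyz hsum =>
    hS _ ((hTS x).1 hx) _ ((hTS y).1 hy) _ ((hTS z).1 hz) (e.injective.ne hxy)
      (e.injective.ne hxz) (e.injective.ne hyz) ((he x y z).1 hsum)

end AffinelyEquivalent

end Collineations

section Layers

variable {n : ℕ}

/-- The section of `S` by the hyperplane `x 0 = s`, as a subset of `AG(n,3)`. -/
def layer (S : Finset (Fin (n + 1) → ZMod 3)) (s : ZMod 3) : Finset (Fin n → ZMod 3) :=
  {y | (Fin.cons s y : Fin (n + 1) → ZMod 3) ∈ S}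

@[simp]
theorem mem_layer {S : Finset (Fin (n + 1) → ZMod 3)} {s : ZMod 3} {y : Fin n → ZMod 3} :
    y ∈ layer S s ↔ (Fin.cons s y : Fin (n + 1) → ZMod 3) ∈ S := by
  simp [layer]

theorem card_layer (S : Finset (Fin (n + 1) → ZMod 3)) (s : ZMod 3) :
    #(layer S s) = #{x ∈ S | x 0 = s} := by
  refine card_nbij (fun y => (Fin.cons s y : Fin (n + 1) → ZMod 3)) ?_ ?_ ?_
  · exact fun y hy => by simpa using hy
  · exact fun y _ z _ h => Fin.cons_right_injective _ h
  · intro x hx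
    obtain ⟨hxS, rfl⟩ : x ∈ S ∧ x 0 = s := by simpa using hx
    exact ⟨Fin.tail x, by simpa using hxS, Fin.cons_self_tail x⟩

theorem cons_add_cons_add_cons (r s t : ZMod 3) (x y z : Fin n → ZMod 3) :
    (Fin.cons r x + Fin.cons s y + Fin.cons t z : Fin (n + 1) → ZMod 3) =
      Fin.cons (r + s + t) (x + y + z) := by
  ext i; cases i using Fin.cases <;> rfl

theorem IsCap.isCap_layer {S : Finset (Fin (n + 1) → ZMod 3)} (hS : IsCap S) (s : ZMod 3) :
    IsCap (layer S s) := by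
  intro x hx y hy z hz hxy hxz hyz hsum
  rw [mem_layer] at hx hy hz
  have inj := Fin.cons_right_injective (α := fun _ : Fin (n + 1) => ZMod 3) s
  refine hS _ hx _ hy _ hz (inj.ne hxy) (inj.ne hxz) (inj.ne hyz) ?_
  rw [cons_add_cons_add_cons, hsum]
  have triple : ∀ a : ZMod 3, a + a + a = 0 := by decide
  rw [triple]
  exact Matrix.cons_zero_zero

theorem IsCap.layer_add_add_ne_zero {S : Finset (Fin (n + 1) → ZMod 3)} (hS : IsCap S)
    {x y z : Fin n → ZMod 3} (hx : x ∈ layer S 0) (hy : y ∈ layer S 1)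
    (hz : z ∈ layer S 2) : x + y + z ≠ 0 := by
  rw [mem_layer] at hx hy hz
  intro hsum
  have zero : (Fin.cons 0 x + Fin.cons 1 y + Fin.cons 2 z : Fin (n + 1) → ZMod 3) = 0 := by
    rw [cons_add_cons_add_cons, hsum]
    exact Matrix.cons_zero_zero
  have heads := congr_fun (hS.eq_of_add_add_eq_zero hx hy hz zero).1 0
  exact absurd heads (by decide : (0 : ZMod 3) ≠ 1)

theorem exists_isCollineation_apply_zero {w : Fin (n + 1) → ZMod 3} (hw : w ≠ 0) (c : ZMod 3) :
    ∃ e : (Fin (n + 1) → ZMod 3) ≃ (Fin (n + 1) → ZMod 3),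
      IsCollineation e ∧ ∀ x, e x 0 = w ⬝ᵥ x - c := by
  obtain ⟨i, hi⟩ := Function.ne_iff.1 hw
  let f : (Fin (n + 1) → ZMod 3) →ₗ[ZMod 3] Fin (n + 1) → ZMod 3 :=
    { toFun := fun x => Fin.cons (w ⬝ᵥ x) (i.removeNth x)
      map_add' := fun x y => by
        ext j; cases j using Fin.cases <;> simp [dotProduct_add, Fin.removeNth]
      map_smul' := fun a x => by
        ext j; cases j using Fin.cases <;> simp [dotProduct_smul, Fin.removeNth] }
  have hf : Function.Injective f := by
    refine (injective_iff_map_eq_zero f).2 fun x hx => ?_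
    have hdot : w ⬝ᵥ x = 0 := congr_fun hx 0
    have hrest (j : Fin n) : x (i.succAbove j) = 0 := congr_fun hx j.succ
    have hxi : x i = 0 := by
      have hprod : w i * x i = 0 := by
        simpa only [dotProduct, Fin.sum_univ_succAbove _ i, hrest, mul_zero, sum_const_zero,
          add_zero] using hdot
      exact (mul_eq_zero.1 hprod).resolve_left hi
    ext j
    cases j using i.succAboveCases <;> simp [hxi, hrest]
  obtain ⟨e, he, hef⟩ := exists_isCollineation_of_injective f hf
  refine ⟨e.trans (Equiv.addRight (Pi.single 0 (-c))), he.trans (isCollineation_addRight _), ?_⟩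
  simp [hef, f, sub_eq_add_neg]

theorem exists_affinelyEquivalent_card_layer (S : Finset (Fin (n + 1) → ZMod 3))
    {w : Fin (n + 1) → ZMod 3} (hw : w ≠ 0) (c : ZMod 3) :
    ∃ T, AffinelyEquivalent S T ∧ ∀ s, #(layer T s) = hyperplaneCard S w (c + s) := by
  obtain ⟨e, he, he0⟩ := exists_isCollineation_apply_zero hw c
  refine ⟨_, .map he S, fun s => ?_⟩
  rw [card_layer]
  refine (card_equiv e fun x => ?_).symm
  simp [he0, sub_eq_iff_eq_add, add_comm]

theorem IsCap.hyperplaneCard_le {S : Finset (Fin (n + 1) → ZMod 3)} (hS : IsCap S) {m : ℕ}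
    (hm : ∀ C : Finset (Fin n → ZMod 3), IsCap C → #C ≤ m) {w : Fin (n + 1) → ZMod 3}
    (hw : w ≠ 0) (c : ZMod 3) : hyperplaneCard S w c ≤ m := by
  obtain ⟨T, hST, hT⟩ := exists_affinelyEquivalent_card_layer S hw c
  rw [← add_zero c, ← hT 0]
  exact hm _ ((hST.isCap hS).isCap_layer 0)

end Layers

section Moments

variable {n : ℕ}

theorem exists_ne_zero_lt_of_sum_lt {t : ℕ} {F : (Fin n → ZMod 3) → ℕ}
    (hF : ∑ w, F w < F 0 + (3 ^ n - 1) * t) : ∃ w ≠ 0, F w < t := by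
  rw [← add_sum_erase _ _ (mem_univ 0), Nat.add_lt_add_iff_left] at hF
  obtain ⟨w, hw, hlt⟩ := exists_lt_of_sum_lt (f := F) (g := fun _ => t)
    (hF.trans_eq (by simp [card_erase_of_mem]))
  exact ⟨w, ne_of_mem_erase hw, hlt⟩

theorem exists_ne_zero_gt_of_lt_sum {t : ℕ} {F : (Fin n → ZMod 3) → ℕ}
    (hF : F 0 + (3 ^ n - 1) * t < ∑ w, F w) : ∃ w ≠ 0, t < F w := by
  rw [← add_sum_erase _ _ (mem_univ 0), Nat.add_lt_add_iff_left] at hF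
  obtain ⟨w, hw, hlt⟩ := exists_lt_of_sum_lt (f := fun _ => t) (g := F)
    ((by simp [card_erase_of_mem] : _ = _).trans_lt hF)
  exact ⟨w, ne_of_mem_erase hw, hlt⟩

theorem IsCap.mono {S T : Finset (Fin n → ZMod 3)} (hT : IsCap T) (hST : S ⊆ T) : IsCap S :=
  fun x hx y hy z hz => hT x (hST hx) y (hST hy) z (hST hz)

theorem IsCap.card_lt_of_sq_le {k m b : ℕ}
    (hk : ∀ C : Finset (Fin n → ZMod 3), IsCap C → #C ≤ k)
    (hb : ∀ r ≤ k, ∀ s ≤ k, ∀ t ≤ k, r + s + t = m → r ^ 2 + s ^ 2 + t ^ 2 ≤ b)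
    (hm : 3 * (m ^ 2 + (3 ^ (n + 1) - 1) * b) < 3 ^ (n + 1) * (m ^ 2 + 2 * m))
    {S : Finset (Fin (n + 1) → ZMod 3)} (hS : IsCap S) : #S < m := by
  by_contra! hcard
  obtain ⟨T, hTS, rfl⟩ := exists_subset_card_eq hcard
  have hT := hS.mono hTS
  rw [← sum_hyperplaneCard_sq T] at hm
  obtain ⟨w, hw, hlt⟩ := exists_ne_zero_gt_of_lt_sum (t := b)
    (F := fun w => hyperplaneCard T w 0 ^ 2 + hyperplaneCard T w 1 ^ 2 + hyperplaneCard T w 2 ^ 2)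
    (by simpa [hyperplaneCard_zero_left, (by decide : (2 : ZMod 3) ≠ 0)]
      using lt_of_mul_lt_mul_left' hm)
  exact hlt.not_ge (hb _ (hT.hyperplaneCard_le hk hw 0) _ (hT.hyperplaneCard_le hk hw 1) _
    (hT.hyperplaneCard_le hk hw 2) (hyperplaneCard_add_add T w))

theorem IsCap.card_le_two {S : Finset (Fin 1 → ZMod 3)} (hS : IsCap S) : #S ≤ 2 := by
  by_contra! hcard
  have huniv : S = univ := S.card_eq_iff_eq_univ.1 (le_antisymm (card_le_univ S) hcard)
  exact hS 0 (by simp [huniv]) 1 (by simp [huniv]) 2 (by simp [huniv]) (by decide) (by decide)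
    (by decide) (by decide)

theorem IsCap.card_le_four {S : Finset (Fin 2 → ZMod 3)} (hS : IsCap S) : #S ≤ 4 :=
  Nat.le_of_lt_succ <| hS.card_lt_of_sq_le (k := 2) (b := 9) (fun _ hC => hC.card_le_two)
    (by decide) (by norm_num)

theorem IsCap.card_le_nine {S : Finset (Fin 3 → ZMod 3)} (hS : IsCap S) : #S ≤ 9 :=
  Nat.le_of_lt_succ <| hS.card_lt_of_sq_le (k := 4) (b := 36) (fun _ hC => hC.card_le_four)
    (by decide) (by norm_num)

theorem exists_affinelyEquivalent_card_layer_eq {S : Finset (Fin (n + 1) → ZMod 3)}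
    {w : Fin (n + 1) → ZMod 3} (hw : w ≠ 0) {a b : ℕ}
    (h : (hyperplaneCard S w 0 = a ∧ hyperplaneCard S w 1 = b ∧ hyperplaneCard S w 2 = b) ∨
      (hyperplaneCard S w 1 = a ∧ hyperplaneCard S w 2 = b ∧ hyperplaneCard S w 0 = b) ∨
      (hyperplaneCard S w 2 = a ∧ hyperplaneCard S w 0 = b ∧ hyperplaneCard S w 1 = b)) :
    ∃ T, AffinelyEquivalent S T ∧ #(layer T 0) = a ∧ #(layer T 1) = b ∧ #(layer T 2) = b := by
  obtain ⟨c, h0, h1, h2⟩ : ∃ c, hyperplaneCard S w (c + 0) = a ∧ hyperplaneCard S w (c + 1) = b ∧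
      hyperplaneCard S w (c + 2) = b := by
    rcases h with h | h | h
    exacts [⟨0, h⟩, ⟨1, h⟩, ⟨2, h⟩]
  obtain ⟨T, hST, hT⟩ := exists_affinelyEquivalent_card_layer S hw c
  exact ⟨T, hST, (hT 0).trans h0, (hT 1).trans h1, (hT 2).trans h2⟩

/-- Layers of sizes `(4, 4, 1)` are the only ones making a negative contribution to the sum of the
cubes of the Fourier coefficients of `S`, and that sum is negative. -/
theorem IsCap.exists_card_layer_of_card_eq_nine {S : Finset (Fin 3 → ZMod 3)} (hS : IsCap S)
    (hcard : #S = 9) : ∃ T, AffinelyEquivalent S T ∧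
      #(layer T 0) = 1 ∧ #(layer T 1) = 4 ∧ #(layer T 2) = 4 := by
  have classify : ∀ r ≤ 4, ∀ s ≤ 4, ∀ t ≤ 4, r + s + t = 9 →
      r ^ 3 + s ^ 3 + t ^ 3 + 6 * (r * s * t) < 243 →
      (r = 1 ∧ s = 4 ∧ t = 4) ∨ (s = 1 ∧ t = 4 ∧ r = 4) ∨ (t = 1 ∧ r = 4 ∧ s = 4) := by
    set_option synthInstance.maxSize 1000 in decide
  have cubes := hS.sum_hyperplaneCard_cube
  rw [hcard] at cubes
  obtain ⟨w, hw, hlt⟩ := exists_ne_zero_lt_of_sum_lt (t := 243)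
    (F := fun w => hyperplaneCard S w 0 ^ 3 + hyperplaneCard S w 1 ^ 3 + hyperplaneCard S w 2 ^ 3 +
      6 * (hyperplaneCard S w 0 * hyperplaneCard S w 1 * hyperplaneCard S w 2))
    (by simp [hyperplaneCard_zero_left, hcard, (by decide : (2 : ZMod 3) ≠ 0)]; lia)
  have le (c : ZMod 3) := hS.hyperplaneCard_le (fun _ hC => hC.card_le_four) hw c
  exact exists_affinelyEquivalent_card_layer_eq hw
    (classify _ (le 0) _ (le 1) _ (le 2) (hcard ▸ hyperplaneCard_add_add S w) hlt)

/-- With `f` the indicator function of `S`, the sum of `Re f̂ ^ 3 + 5 * |f̂| ^ 2` over the nonzero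
frequencies is negative, and only layers of sizes `(9, 9, 2)` contribute negatively to it. -/
theorem IsCap.exists_card_layer_of_card_eq_twenty {S : Finset (Fin 4 → ZMod 3)} (hS : IsCap S)
    (hcard : #S = 20) : ∃ T, AffinelyEquivalent S T ∧
      #(layer T 0) = 2 ∧ #(layer T 1) = 9 ∧ #(layer T 2) = 9 := by
  have classify : ∀ r ≤ 9, ∀ s ≤ 9, ∀ t ≤ 9, r + s + t = 20 →
      3 * (r ^ 3 + s ^ 3 + t ^ 3 + 6 * (r * s * t)) + 15 * (r ^ 2 + s ^ 2 + t ^ 2) < 10000 →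
      (r = 2 ∧ s = 9 ∧ t = 9) ∨ (s = 2 ∧ t = 9 ∧ r = 9) ∨ (t = 2 ∧ r = 9 ∧ s = 9) := by
    set_option synthInstance.maxSize 1000 in decide +kernel
  have cubes := hS.sum_hyperplaneCard_cube
  have squares := sum_hyperplaneCard_sq S
  rw [hcard] at cubes squares
  obtain ⟨w, hw, hlt⟩ := exists_ne_zero_lt_of_sum_lt (t := 10000)
    (F := fun w => 3 * (hyperplaneCard S w 0 ^ 3 + hyperplaneCard S w 1 ^ 3 +
      hyperplaneCard S w 2 ^ 3 +
      6 * (hyperplaneCard S w 0 * hyperplaneCard S w 1 * hyperplaneCard S w 2)) +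
      15 * (hyperplaneCard S w 0 ^ 2 + hyperplaneCard S w 1 ^ 2 + hyperplaneCard S w 2 ^ 2))
    (by
      rw [sum_add_distrib, ← mul_sum, ← mul_sum, cubes]
      simp [hyperplaneCard_zero_left, hcard, (by decide : (2 : ZMod 3) ≠ 0)]; lia)
  have le (c : ZMod 3) := hS.hyperplaneCard_le (fun _ hC => hC.card_le_nine) hw c
  exact exists_affinelyEquivalent_card_layer_eq hw
    (classify _ (le 0) _ (le 1) _ (le 2) (hcard ▸ hyperplaneCard_add_add S w) hlt)

end Moments

section NineCaps

theorem exists_affinelyEquivalent_mem_layer {n : ℕ} (S : Finset (Fin (n + 1) → ZMod 3))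
    {f : (Fin n → ZMod 3) ≃ (Fin n → ZMod 3)} (hf : IsCollineation f) (v : Fin n → ZMod 3) :
    ∃ T, AffinelyEquivalent S T ∧
      (∀ s y, y ∈ layer T s ↔ f.symm (y - s • v) ∈ layer S s) ∧
      ∀ s, #(layer T s) = #(layer S s) := by
  let e : (Fin (n + 1) → ZMod 3) ≃ (Fin (n + 1) → ZMod 3) :=
    { toFun := fun x => Fin.cons (x 0) (f (Fin.tail x) + x 0 • v)
      invFun := fun x => Fin.cons (x 0) (f.symm (Fin.tail x - x 0 • v))
      left_inv := fun x => by simp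
      right_inv := fun x => by simp }
  have he : IsCollineation e := isCollineation_of_map_add_add fun x y z h => by
    have head : x 0 + y 0 + z 0 = 0 := congr_fun h 0
    have tail : Fin.tail x + Fin.tail y + Fin.tail z = 0 := funext fun i => congr_fun h i.succ
    calc e x + e y + e z
      _ = Fin.cons (x 0 + y 0 + z 0) (f (Fin.tail x) + x 0 • v + (f (Fin.tail y) + y 0 • v) +
          (f (Fin.tail z) + z 0 • v)) := cons_add_cons_add_cons ..
      _ = Fin.cons (x 0 + y 0 + z 0) ((f (Fin.tail x) + f (Fin.tail y) + f (Fin.tail z)) +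
          (x 0 + y 0 + z 0) • v) := by rw [add_smul, add_smul]; congr 1; abel
      _ = 0 := by rw [head, (hf _ _ _).1 tail, zero_smul, add_zero]; exact Matrix.cons_zero_zero
  have hT (s y) : y ∈ layer (S.map e.toEmbedding) s ↔ f.symm (y - s • v) ∈ layer S s := by
    simp [mem_map_equiv, e]
  exact ⟨_, .map he S, hT, fun s => card_equiv ((Equiv.subRight (s • v)).trans f.symm) (hT s)⟩

theorem mem_iff_tail_mem_layer {n : ℕ} {S : Finset (Fin (n + 1) → ZMod 3)}
    {x : Fin (n + 1) → ZMod 3} : x ∈ S ↔ Fin.tail x ∈ layer S (x 0) := by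
  rw [mem_layer, Fin.cons_self_tail]

/-- The anisotropic quadratic form of the plane `AG(2,3)`. -/
def normSq (y : Fin 2 → ZMod 3) : ZMod 3 := y 0 ^ 2 + y 1 ^ 2

theorem exists_affinelyEquivalent_layer_one_eq {n : ℕ} {S : Finset (Fin (n + 1) → ZMod 3)}
    {R : Finset (Fin n → ZMod 3)} (hR : AffinelyEquivalent (layer S 1) R) {p : Fin n → ZMod 3}
    (hp : p ∈ layer S 0) : ∃ T, AffinelyEquivalent S T ∧ 0 ∈ layer T 0 ∧ layer T 1 = R ∧
      ∀ s, #(layer T s) = #(layer S s) := by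
  obtain ⟨e, he, he1⟩ := hR
  obtain ⟨T, hST, hT, hTcard⟩ := exists_affinelyEquivalent_mem_layer S
    (he.trans (isCollineation_addRight (-e p))) (e p)
  refine ⟨T, hST, (hT 0 0).2 (by simpa using hp), ?_, hTcard⟩
  ext y
  rw [hT, he1]
  simp

theorem IsCap.exists_add_eq_add_of_card_eq_four {S : Finset (Fin 2 → ZMod 3)} (hS : IsCap S)
    (hcard : #S = 4) : ∃ a b c d, a + b = c + d ∧ a ≠ b ∧ c ≠ d ∧ a ≠ c ∧ b ≠ c ∧
      S = {a, b, c, d} := by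
  have pairing : ∀ a b : Fin 2 → ZMod 3, a ≠ b → ∀ c, a ≠ c → b ≠ c → a + b + c ≠ 0 →
      ∀ d, a ≠ d → b ≠ d → c ≠ d → a + b + d ≠ 0 → a + c + d ≠ 0 → b + c + d ≠ 0 →
      a + b = c + d ∨ a + c = b + d ∨ a + d = b + c := by
    set_option synthInstance.maxSize 1000 in decide +kernel
  obtain ⟨a, R, ha, rfl, hR⟩ := card_eq_succ.1 hcard
  obtain ⟨b, c, d, hbc, hbd, hcd, rfl⟩ := card_eq_three.1 hR
  simp only [mem_insert, mem_singleton, not_or] at ha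
  obtain ⟨hab, hac, had⟩ := ha
  rcases pairing a b hab c hac hbc (hS a (by simp) b (by simp) c (by simp) hab hac hbc) d had hbd
    hcd (hS a (by simp) b (by simp) d (by simp) hab had hbd)
    (hS a (by simp) c (by simp) d (by simp) hac had hcd)
    (hS b (by simp) c (by simp) d (by simp) hbc hbd hcd) with h | h | h
  · exact ⟨a, b, c, d, h, hab, hcd, hac, hbc, rfl⟩
  · exact ⟨a, c, b, d, h, hac, hbd, hab, hbc.symm, by rw [insert_comm b c]⟩
  · refine ⟨a, d, b, c, h, had, hbc, hab, hbd.symm, ?_⟩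
    rw [pair_comm c d, insert_comm b d]

theorem IsCap.affinelyEquivalent_normSq_eq_one {S : Finset (Fin 2 → ZMod 3)} (hS : IsCap S)
    (hcard : #S = 4) : AffinelyEquivalent S {y | normSq y = 1} := by
  obtain ⟨a, b, c, d, hsum, hab, hcd, hac, hbc, rfl⟩ := hS.exists_add_eq_add_of_card_eq_four hcard
  have independent : ∀ u v : Fin 2 → ZMod 3, u ≠ 0 → v ≠ 0 → u ≠ v → u + v ≠ 0 →
      ∀ t : Fin 2 → ZMod 3, t 0 • u + t 1 • v = 0 → t = 0 := by
    set_option synthInstance.maxSize 1000 in decide +kernel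
  let m := -(a + b)
  have opposite {x y : Fin 2 → ZMod 3} (hxy : x + y = a + b) : -(x - m) + m = y := by
    calc -(x - m) + m = y + (m + m + m) := by grind
      _ = y := by rw [add_add_self_eq_zero, add_zero]
  have sub_ne_zero_of_ne {x y : Fin 2 → ZMod 3} (hxy : x + y = a + b) (hne : x ≠ y) :
      x - m ≠ 0 := fun h => hne (by simpa [sub_eq_zero.1 h] using opposite hxy)
  have noncollinear : a - m + (c - m) ≠ 0 := fun h => hbc <| by
    rw [← opposite (rfl : a + b = a + b), eq_neg_of_add_eq_zero_left h, neg_neg, sub_add_cancel]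
  let f : (Fin 2 → ZMod 3) →ₗ[ZMod 3] Fin 2 → ZMod 3 :=
    (LinearMap.proj 0).smulRight (a - m) + (LinearMap.proj 1).smulRight (c - m)
  obtain ⟨e, he, hef⟩ := exists_isCollineation_of_injective f <|
    (injective_iff_map_eq_zero f).2 <| independent _ _ (sub_ne_zero_of_ne rfl hab)
      (sub_ne_zero_of_ne hsum.symm hcd) (fun h => hac (sub_left_injective h)) noncollinear
  refine ⟨(e.trans (Equiv.addRight m)).symm, (he.trans (isCollineation_addRight m)).symm,
    fun y => ?_⟩
  have circle : ∀ t : Fin 2 → ZMod 3,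
      normSq t = 1 ↔ t = ![1, 0] ∨ t = ![-1, 0] ∨ t = ![0, 1] ∨ t = ![0, -1] := by decide
  have ha : f ![1, 0] + m = a := by simp [f]
  have hb : f ![-1, 0] + m = b := by simpa [f] using opposite rfl
  have hc : f ![0, 1] + m = c := by simp [f]
  have hd : f ![0, -1] + m = d := by simpa [f] using opposite hsum.symm
  simp only [circle, Equiv.symm_apply_eq, Equiv.trans_apply, Equiv.coe_addRight, hef, ha, hb, hc,
    hd, mem_insert, mem_singleton, mem_filter, mem_univ, true_and]

theorem IsCap.mem_iff_normSq_eq_two {S : Finset (Fin 2 → ZMod 3)} (hS : IsCap S)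
    (hcard : #S = 4) (hdisj : ∀ y ∈ S, normSq y ≠ 1) (y : Fin 2 → ZMod 3) :
    y ∈ S ↔ normSq y = 2 := by
  have corners : #{y : Fin 2 → ZMod 3 | normSq y = 2} = 4 := by decide
  have hzero : 0 ∉ S := by
    intro h0
    have missing : #(({y | normSq y ≠ 1} : Finset (Fin 2 → ZMod 3)) \ S) = 1 := by
      have : #{y : Fin 2 → ZMod 3 | normSq y ≠ 1} = 5 := by decide
      rw [card_sdiff_of_subset fun y hy => mem_filter.2 ⟨mem_univ y, hdisj y hy⟩, hcard, this]
    obtain ⟨z, hz⟩ := card_eq_one.1 missing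
    have mem (y) (hy : normSq y ≠ 1) (hyz : y ≠ z) : y ∈ S := by
      by_contra hyS
      exact hyz (mem_singleton.1 (hz ▸ mem_sdiff.2 ⟨mem_filter.2 ⟨mem_univ y, hy⟩, hyS⟩))
    obtain ⟨y, hy, hy', hy0, hyz, hyz'⟩ : ∃ y, normSq y ≠ 1 ∧ normSq (-y) ≠ 1 ∧ 0 ≠ y ∧
        y ≠ z ∧ -y ≠ z := by
      have : ∀ z : Fin 2 → ZMod 3, ∃ y, normSq y ≠ 1 ∧ normSq (-y) ≠ 1 ∧ 0 ≠ y ∧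
        y ≠ z ∧ -y ≠ z := by decide
      exact this z
    exact hy0 (hS.eq_of_add_add_eq_zero h0 (mem y hy hyz) (mem (-y) hy' hyz') (by simp)).1
  have hsub : S ⊆ ({y | normSq y = 2} : Finset _) := by
    have other : ∀ y : Fin 2 → ZMod 3, normSq y ≠ 1 → y ≠ 0 → normSq y = 2 := by decide
    exact fun y hy => mem_filter.2
      ⟨mem_univ y, other y (hdisj y hy) (ne_of_mem_of_not_mem hy hzero)⟩
  rw [eq_of_subset_of_card_le hsub (corners.trans hcard.symm).le]
  simp

/-- The elliptic paraboloid, the normal form of the `9`-point caps in `AG(3,3)`. -/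
def paraboloid : Finset (Fin 3 → ZMod 3) := {x | x 0 = normSq (Fin.tail x)}

theorem IsCap.affinelyEquivalent_paraboloid {S : Finset (Fin 3 → ZMod 3)} (hS : IsCap S)
    (hcard : #S = 9) : AffinelyEquivalent S paraboloid := by
  obtain ⟨T, hST, h0, h1, h2⟩ := hS.exists_card_layer_of_card_eq_nine hcard
  have hT := hST.isCap hS
  obtain ⟨p, hp⟩ := card_eq_one.1 h0
  obtain ⟨U, hTU, hU0, hU1, hUcard⟩ := exists_affinelyEquivalent_layer_one_eq
    ((hT.isCap_layer 1).affinelyEquivalent_normSq_eq_one h1) (p := p) (by simp [hp])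
  have hUcap := hTU.isCap hT
  have U0 (y) : y ∈ layer U 0 ↔ normSq y = 0 := by
    have anisotropic : ∀ y, normSq y = 0 ↔ y = 0 := by decide
    obtain ⟨z, hz⟩ := card_eq_one.1 ((hUcard 0).trans h0)
    rw [hz, mem_singleton] at hU0
    rw [anisotropic, hz, mem_singleton, hU0]
  have U1 (y) : y ∈ layer U 1 ↔ normSq y = 1 := by simp [hU1]
  have U2 : ∀ y, y ∈ layer U 2 ↔ normSq y = 2 :=
    (hUcap.isCap_layer 2).mem_iff_normSq_eq_two ((hUcard 2).trans h2) fun y hy hy1 => by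
      have neg : ∀ y, normSq (-y) = normSq y := by decide
      exact hUcap.layer_add_add_ne_zero ((U0 0).2 rfl) ((U1 (-y)).2 ((neg y).trans hy1)) hy
        (by simp)
  suffices hUP : U = paraboloid from hUP ▸ hST.trans hTU
  have hmem (s : ZMod 3) (y) : y ∈ layer U s ↔ normSq y = s := by
    fin_cases s
    exacts [U0 y, U1 y, U2 y]
  ext x
  rw [mem_iff_tail_mem_layer, hmem, paraboloid, mem_filter, eq_comm]
  simp

end NineCaps

section TwentyCaps

/-- The height of a point of `AG(3,3)` above the paraboloid `x 0 = -normSq (Fin.tail x)`. -/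
def height (x : Fin 3 → ZMod 3) : ZMod 3 := x 0 + normSq (Fin.tail x)

/-- The points of `AG(3,3)` off the plane `d ⬝ᵥ Fin.tail x = c` whose height is different from both
`0` and `d ⬝ᵥ Fin.tail x - c`. If a `20`-point cap has the layers `{0, q}`, `paraboloid` and
`B`, then `B` meets the complement of the plane in such points only, for `d = Fin.tail q`. -/
def offPlane (d : Fin 2 → ZMod 3) (c : ZMod 3) : Finset (Fin 3 → ZMod 3) :=
  {x | d ⬝ᵥ Fin.tail x ≠ c ∧ height x ≠ 0 ∧ height x ≠ d ⬝ᵥ Fin.tail x - c}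

theorem card_offPlane : ∀ d : Fin 2 → ZMod 3, d ≠ 0 → ∀ c, #(offPlane d c) = 6 := by
  decide +kernel

theorem four_le_card_filter_offPlane : ∀ d : Fin 2 → ZMod 3, d ≠ 0 → ∀ c x, height x ≠ 0 →
    d ⬝ᵥ Fin.tail x = c → ∀ y, x ≠ y → height y ≠ 0 → d ⬝ᵥ Fin.tail y = c →
    4 ≤ #{p ∈ offPlane d c | -(p + x) ∈ offPlane d c ∨ -(p + y) ∈ offPlane d c} := by
  set_option synthInstance.maxSize 1000 in decide +kernel

theorem IsCap.one_lt_card_and_card_offPlane_sdiff_le_one {B : Finset (Fin 3 → ZMod 3)}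
    (hB : IsCap B) (hcard : #B = 9) {d : Fin 2 → ZMod 3} (hd : d ≠ 0) {c : ZMod 3}
    (hne : ∀ x ∈ B, height x ≠ 0 ∧ height x ≠ d ⬝ᵥ Fin.tail x - c) :
    1 < #{x ∈ B | d ⬝ᵥ Fin.tail x = c} ∧ #(offPlane d c \ B) ≤ 1 := by
  have hsplit := card_filter_add_card_filter_not (s := B) (fun x => d ⬝ᵥ Fin.tail x = c)
  have hoff : {x ∈ B | ¬d ⬝ᵥ Fin.tail x = c} = offPlane d c ∩ B := by
    ext x
    have := hne x
    simp only [offPlane, mem_filter, mem_inter, mem_univ, true_and]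
    tauto
  have hsix := card_sdiff_add_card_inter (offPlane d c) B
  rw [hoff, hcard] at hsplit
  rw [card_offPlane d hd c] at hsix
  have hon : #{x ∈ B | d ⬝ᵥ Fin.tail x = c} ≤ 4 := by
    have hw : (Fin.cons 0 d : Fin 3 → ZMod 3) ≠ 0 := fun h => hd <|
      funext fun i => congr_fun h i.succ
    refine le_trans (card_le_card fun x hx => ?_)
      (hB.hyperplaneCard_le (fun _ hC => hC.card_le_four) hw c)
    simpa [dotProduct, Fin.sum_univ_succ, Fin.tail] using hx
  constructor <;> lia

/-- Two of the points of `B` on the plane `d ⬝ᵥ Fin.tail x = c` span lines with too many pairs of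
points of `offPlane d c`, of which `B` contains all but at most one. -/
theorem IsCap.eq_zero_of_forall_height_ne {B : Finset (Fin 3 → ZMod 3)} (hB : IsCap B)
    (hcard : #B = 9) {d : Fin 2 → ZMod 3} {c : ZMod 3}
    (hne : ∀ x ∈ B, height x ≠ 0 ∧ height x ≠ d ⬝ᵥ Fin.tail x - c) : d = 0 := by
  by_contra hd
  obtain ⟨hon, hmissing⟩ := hB.one_lt_card_and_card_offPlane_sdiff_le_one hcard hd hne
  obtain ⟨x, hx, y, hy, hxy⟩ := one_lt_card.1 hon
  obtain ⟨hxB, hxc⟩ := mem_filter.1 hx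
  obtain ⟨hyB, hyc⟩ := mem_filter.1 hy
  obtain ⟨f, hf⟩ := card_le_one_iff_subset_singleton.1 hmissing
  have hmem {p} (hp : p ∈ offPlane d c) (hpf : p ≠ f) : p ∈ B := by
    by_contra hpB
    exact hpf (mem_singleton.1 (hf (mem_sdiff.2 ⟨hp, hpB⟩)))
  have hpair {p z} (hp : p ∈ offPlane d c) (hz : z ∈ B) (hzc : d ⬝ᵥ Fin.tail z = c)
      (hpz : -(p + z) ∈ offPlane d c) : p = f ∨ p = -(f + z) := by
    by_contra! h
    have hpz' : -(p + z) ≠ f := fun hpf => h.2 (by rw [← hpf]; abel)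
    obtain ⟨rfl, -⟩ := hB.eq_of_add_add_eq_zero (hmem hp h.1) hz (hmem hpz hpz') (add_neg_cancel _)
    exact (mem_filter.1 hp).2.1 hzc
  have hthree : {p ∈ offPlane d c | -(p + x) ∈ offPlane d c ∨ -(p + y) ∈ offPlane d c} ⊆
      {f, -(f + x), -(f + y)} := fun p hp => by
    obtain ⟨hp, hpx | hpy⟩ := mem_filter.1 hp
    · rcases hpair hp hxB hxc hpx with h | h <;> simp [h]
    · rcases hpair hp hyB hyc hpy with h | h <;> simp [h]
  have hfour := four_le_card_filter_offPlane d hd c x (hne x hxB).1 hxc y hxy (hne y hyB).1 hyc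
  exact absurd (hfour.trans ((card_le_card hthree).trans card_le_three)) (by decide)

theorem IsCap.exists_layer_eq_of_card_eq_twenty {S : Finset (Fin 4 → ZMod 3)} (hS : IsCap S)
    (hcard : #S = 20) : ∃ T q, AffinelyEquivalent S T ∧ q ≠ 0 ∧ layer T 0 = {0, q} ∧
      layer T 1 = paraboloid ∧ #(layer T 2) = 9 := by
  obtain ⟨U, hSU, h0, h1, h2⟩ := hS.exists_card_layer_of_card_eq_twenty hcard
  obtain ⟨p, hp⟩ : (layer U 0).Nonempty := card_pos.1 (by simp [h0])
  obtain ⟨T, hUT, hT0, hT1, hTcard⟩ := exists_affinelyEquivalent_layer_one_eq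
    (((hSU.isCap hS).isCap_layer 1).affinelyEquivalent_paraboloid h1) hp
  obtain ⟨q, hq⟩ := card_eq_one.1 (show #((layer T 0).erase 0) = 1 by
    rw [card_erase_of_mem hT0, hTcard, h0])
  have hq0 : q ∈ (layer T 0).erase 0 := by simp [hq]
  exact ⟨T, q, hSU.trans hUT, ne_of_mem_erase hq0, by rw [← hq, insert_erase hT0], hT1,
    (hTcard 2).trans h2⟩

theorem IsCap.layer_two_eq_of_layer_zero_eq {T : Finset (Fin 4 → ZMod 3)} (hT : IsCap T)
    {q : Fin 3 → ZMod 3} (hq : q ≠ 0) (h0 : layer T 0 = {0, q}) (h1 : layer T 1 = paraboloid)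
    (h2 : #(layer T 2) = 9) :
    ∃ e ≠ 0, q = Pi.single 0 e ∧ ∀ x, x ∈ layer T 2 ↔ height x = e := by
  have hsum {x y z} (hx : x = 0 ∨ x = q) (hy : y 0 = normSq (Fin.tail y)) (hz : z ∈ layer T 2) :
      x + y + z ≠ 0 :=
    hT.layer_add_add_ne_zero (by simpa [h0] using hx) (by simpa [h1, paraboloid] using hy) hz
  have expand : ∀ e a : ZMod 3, ∀ d u : Fin 2 → ZMod 3,
      (a + normSq u = d ⬝ᵥ u - (e + normSq d) → -(e + a) = normSq (-(d + u))) ∧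
      (a + normSq u = 0 → -a = normSq (-u)) := by
    set_option synthInstance.maxSize 1000 in decide +kernel
  have hne (x) (hx : x ∈ layer T 2) :
      height x ≠ 0 ∧ height x ≠ Fin.tail q ⬝ᵥ Fin.tail x - (q 0 + normSq (Fin.tail q)) := by
    constructor <;> intro h
    · exact hsum (y := -x) (.inl rfl) ((expand 0 _ 0 _).2 h) hx (by simp)
    · exact hsum (y := -(q + x)) (.inr rfl) ((expand _ _ _ _).1 h) hx (by abel)
  have htail := (hT.isCap_layer 2).eq_zero_of_forall_height_ne h2 hne
  have hqe : q = Pi.single 0 (q 0) := by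
    ext i
    cases i using Fin.cases with
    | zero => simp
    | succ i => exact congr_fun htail i
  have he : q 0 ≠ 0 := fun h => hq (by rw [hqe, h, Pi.single_zero])
  refine ⟨q 0, he, hqe, fun x => ?_⟩
  have hsub : layer T 2 ⊆ ({x | height x = q 0} : Finset _) := fun x hx => by
    have third : ∀ e ≠ (0 : ZMod 3), ∀ h, h ≠ 0 → h ≠ -e → h = e := by decide
    obtain ⟨hx0, hxe⟩ := hne x hx
    exact mem_filter.2 ⟨mem_univ x, third _ he _ hx0 (by simpa [htail, normSq] using hxe)⟩
  have hnine : ∀ e, #({x | height x = e} : Finset (Fin 3 → ZMod 3)) = 9 := by decide +kernel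
  rw [eq_of_subset_of_card_le hsub (by rw [hnine, h2])]
  simp

/-- The hyperbolic-plus-anisotropic normal form of an elliptic quadratic form on `AG(4,3)`. -/
def ellipticForm (x : Fin 4 → ZMod 3) : ZMod 3 := x 2 ^ 2 + x 3 ^ 2 - x 0 * x 1

/-- The normal form of the `20`-point caps in `AG(4,3)`: the cone over an elliptic quadric of
`PG(3,3)` without its vertex. -/
def ellipticCone : Finset (Fin 4 → ZMod 3) := {x | x ≠ 0 ∧ ellipticForm x = 0}

theorem IsCap.affinelyEquivalent_ellipticCone {S : Finset (Fin 4 → ZMod 3)} (hS : IsCap S)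
    (hcard : #S = 20) : AffinelyEquivalent S ellipticCone := by
  obtain ⟨T, q, hST, hq, h0, h1, h2⟩ := hS.exists_layer_eq_of_card_eq_twenty hcard
  obtain ⟨e, he, rfl, h2⟩ := (hST.isCap hS).layer_two_eq_of_layer_zero_eq hq h0 h1 h2
  obtain ⟨U, hTU, hU, -⟩ := exists_affinelyEquivalent_mem_layer T
    (isCollineation_addRight (Pi.single 0 e)) (-Pi.single 0 e)
  suffices hUC : U = ellipticCone from hUC ▸ hST.trans hTU
  have layers : ∀ e ≠ 0, ∀ y : Fin 3 → ZMod 3,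
      (y ∈ layer ellipticCone 0 ↔ y - Pi.single 0 e = 0 ∨ y - Pi.single 0 e = Pi.single 0 e) ∧
      (y ∈ layer ellipticCone 1 ↔ y ∈ paraboloid) ∧
      (y ∈ layer ellipticCone 2 ↔ height (y + Pi.single 0 e) = e) := by
    set_option synthInstance.maxSize 1000 in decide +kernel
  ext x
  obtain ⟨l0, l1, l2⟩ := layers e he (Fin.tail x)
  rw [mem_iff_tail_mem_layer, mem_iff_tail_mem_layer (S := ellipticCone), hU]
  obtain hs | hs | hs : x 0 = 0 ∨ x 0 = 1 ∨ x 0 = 2 := by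
    have : ∀ s : ZMod 3, s = 0 ∨ s = 1 ∨ s = 2 := by decide
    exact this (x 0)
  · rw [hs, l0, h0]
    simp [sub_eq_add_neg]
  · rw [hs, l1, h1]
    simp [sub_eq_add_neg]
  · rw [hs, l2, h2]
    simp [two_smul, sub_eq_add_neg, ← add_assoc]

theorem IsCap.card_le_twenty {S : Finset (Fin 4 → ZMod 3)} (hS : IsCap S) : #S ≤ 20 := by
  by_contra! hcard
  obtain ⟨R, hRS, hR⟩ := exists_subset_card_eq hcard.le
  obtain ⟨x, hx, hxR⟩ := exists_mem_notMem_of_card_lt_card (hR.trans_lt hcard)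
  obtain ⟨e, he, hRe⟩ := (hS.mono hRS).affinelyEquivalent_ellipticCone hR
  have complete : ∀ x ∉ ellipticCone, ∃ y ∈ ellipticCone,
      -(x + y) ∈ ellipticCone ∧ y ≠ -(x + y) := by
    decide +kernel
  obtain ⟨y, hy, hxy, hne⟩ := complete (e x) (hxR ∘ (hRe x).2)
  have mem {z} (hz : z ∈ ellipticCone) : e.symm z ∈ S := hRS ((hRe _).2 (by simpa using hz))
  refine hne (e.symm.injective ?_)
  obtain ⟨h1, h2⟩ := hS.eq_of_add_add_eq_zero hx (mem hy) (mem hxy)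
    ((he _ _ _).2 (by simp))
  exact h1.symm.trans h2

theorem isCap_ellipticCone : IsCap ellipticCone := by
  have neg_add_notMem : ∀ x ∈ ellipticCone, ∀ y ∈ ellipticCone, x ≠ y →
      -(x + y) ∉ ellipticCone := by
    set_option synthInstance.maxSize 1000 in decide +kernel
  exact fun x hx y hy z hz hxy _ _ h =>
    neg_add_notMem x hx y hy hxy (neg_eq_of_add_eq_zero_right h ▸ hz)

theorem card_ellipticCone : #ellipticCone = 20 := by decide +kernel

theorem maximalCap_iff {S : Finset (Fin 4 → ZMod 3)} : MaximalCap S ↔ IsCap S ∧ #S = 20 := by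
  refine ⟨fun h => ⟨h.1, h.1.card_le_twenty.antisymm ?_⟩, fun h => ⟨h.1, fun D hD => ?_⟩⟩
  · exact card_ellipticCone ▸ h.2 _ isCap_ellipticCone
  · exact hD.card_le_twenty.trans_eq h.2.symm

end TwentyCaps

section Anchors

theorem IsCollineation.exists_linearEquiv {n : ℕ} {e : (Fin n → ZMod 3) ≃ (Fin n → ZMod 3)}
    (he : IsCollineation e) :
    ∃ L : (Fin n → ZMod 3) ≃ₗ[ZMod 3] (Fin n → ZMod 3), ∀ x, e x = L x + e 0 := by
  have map_add (x y) : e (x + y) + e 0 = e x + e y := by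
    have h1 : e x + e y + e (-(x + y)) = 0 := (he _ _ _).1 (by simp)
    have h2 : e (x + y) + e 0 + e (-(x + y)) = 0 := (he _ _ _).1 (by simp)
    exact add_right_cancel (h2.trans h1.symm)
  let f : (Fin n → ZMod 3) →+ (Fin n → ZMod 3) :=
    AddMonoidHom.mk' (fun x => e x - e 0) fun x y => by
      rw [eq_sub_of_add_eq (map_add x y)]
      abel
  have hf : Function.Injective (f.toZModLinearMap 3) := fun x y h =>
    e.injective (sub_left_injective h)
  exact ⟨.ofBijective _ hf.bijective_of_finite, fun x => (sub_add_cancel _ _).symm⟩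

/-- `D` is the cone over an elliptic quadric with vertex `a`, deprived of its vertex. This `a` is
the anchor point of the cap `D`. -/
def HasAnchor (D : Finset (Fin 4 → ZMod 3)) (a : Fin 4 → ZMod 3) : Prop :=
  ∃ L : (Fin 4 → ZMod 3) ≃ₗ[ZMod 3] (Fin 4 → ZMod 3), ∀ x, x ∈ D ↔ L (x - a) ∈ ellipticCone

theorem IsCap.exists_hasAnchor {D : Finset (Fin 4 → ZMod 3)} (hD : IsCap D) (hcard : #D = 20) :
    ∃ a, HasAnchor D a := by
  obtain ⟨e, he, hDe⟩ := hD.affinelyEquivalent_ellipticCone hcard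
  obtain ⟨L, hL⟩ := he.exists_linearEquiv
  have ha : L (e.symm 0) + e 0 = 0 := by rw [← hL, e.apply_symm_apply]
  refine ⟨e.symm 0, L, fun x => ?_⟩
  rw [hDe, hL, map_sub, eq_neg_of_add_eq_zero_left ha, sub_neg_eq_add]

theorem HasAnchor.card_eq {D : Finset (Fin 4 → ZMod 3)} {a : Fin 4 → ZMod 3}
    (hD : HasAnchor D a) : #D = 20 := by
  obtain ⟨L, hL⟩ := hD
  rw [← card_ellipticCone]
  exact card_equiv ((Equiv.subRight a).trans L.toEquiv) hL

/-- The orthogonal reflection in `v` for `ellipticForm`. The usual formula divides by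
`ellipticForm v`, which is its own inverse. -/
def reflection (v x : Fin 4 → ZMod 3) : Fin 4 → ZMod 3 :=
  x - (ellipticForm v * QuadraticMap.polar ellipticForm v x) • v

theorem exists_linearEquiv_reflection {v : Fin 4 → ZMod 3} (hv : ellipticForm v ≠ 0) :
    ∃ R : (Fin 4 → ZMod 3) ≃ₗ[ZMod 3] (Fin 4 → ZMod 3), (∀ x, R x = reflection v x) ∧
      (∀ x, R (R x) = x) ∧ ∀ x, ellipticForm (R x) = ellipticForm x := by
  have hv2 : ellipticForm v ^ 2 = 1 := by
    have sq_eq_one : ∀ t : ZMod 3, t ≠ 0 → t ^ 2 = 1 := by decide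
    exact sq_eq_one _ hv
  let f : Module.Dual (ZMod 3) (Fin 4 → ZMod 3) :=
    { toFun := fun x => ellipticForm v * QuadraticMap.polar ellipticForm v x
      map_add' := fun x y => by
        simp only [QuadraticMap.polar, ellipticForm, Pi.add_apply]; ring
      map_smul' := fun t x => by
        simp only [QuadraticMap.polar, ellipticForm, Pi.add_apply, Pi.smul_apply, smul_eq_mul,
          RingHom.id_apply]; ring }
  have hf : f v = 2 := by
    have : f v = 2 * ellipticForm v ^ 2 := by
      simp only [f, LinearMap.coe_mk, AddHom.coe_mk, QuadraticMap.polar, ellipticForm,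
        Pi.add_apply]; ring
    rw [this, hv2, mul_one]
  refine ⟨Module.reflection hf, fun x => Module.reflection_apply x hf,
    Module.involutive_reflection hf, fun x => ?_⟩
  have expand (t : ZMod 3) : ellipticForm (x - t • v) =
      ellipticForm x - t * QuadraticMap.polar ellipticForm v x + t ^ 2 * ellipticForm v := by
    simp only [QuadraticMap.polar, ellipticForm, Pi.add_apply, Pi.sub_apply, Pi.smul_apply,
      smul_eq_mul]; ring
  rw [Module.reflection_apply, expand]
  change ellipticForm x - ellipticForm v * QuadraticMap.polar ellipticForm v x * _ +
    (ellipticForm v * QuadraticMap.polar ellipticForm v x) ^ 2 * ellipticForm v = _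
  linear_combination ellipticForm v * QuadraticMap.polar ellipticForm v x ^ 2 * hv2

theorem HasAnchor.exists_reflection {D : Finset (Fin 4 → ZMod 3)} {a v : Fin 4 → ZMod 3}
    (hD : HasAnchor D a) (hdisj : Disjoint ellipticCone D) (hv : ellipticForm v ≠ 0) :
    ∃ D', HasAnchor D' (reflection v a) ∧ Disjoint ellipticCone D' := by
  obtain ⟨L, hL⟩ := hD
  obtain ⟨R, hRv, hRR, hR⟩ := exists_linearEquiv_reflection hv
  refine ⟨D.map R.toEquiv.toEmbedding, ⟨R.trans L, fun x => ?_⟩, ?_⟩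
  · obtain ⟨y, rfl⟩ := R.surjective x
    rw [← hRv, ← map_sub, LinearEquiv.trans_apply, hRR, ← hL]
    exact mem_map' R.toEquiv.toEmbedding
  · refine disjoint_left.2 fun x hx hxD => ?_
    obtain ⟨y, hy, rfl⟩ := mem_map.1 hxD
    refine disjoint_left.1 hdisj (mem_filter.2 ?_) hy
    simpa [ellipticCone, hR] using hx

/-- A nonzero vector for each value of `ellipticForm`, representing the orbits of its isometry
group on the nonzero vectors. -/
def orbitRepresentatives : List (Fin 4 → ZMod 3) := [![1, 0, 0, 0], ![1, 2, 0, 0], ![1, 1, 0, 0]]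

theorem exists_reflection_reflection_eq : ∀ a : Fin 4 → ZMod 3, a ≠ 0 →
    ∃ v, ellipticForm v ≠ 0 ∧ ∃ r ∈ orbitRepresentatives,
      ellipticForm (reflection v a - r) ≠ 0 ∧
        reflection (reflection v a - r) (reflection v a) = r := by
  decide +kernel

end Anchors

section CoefficientLists

/-- The dot product of two lists. Quadratic forms over `ZMod 3` are encoded by lists of natural
numbers, read modulo `3`, because the kernel computes with natural number literals. -/
def listDot : List ℕ → List ℕ → ℕ
  | [], _ => 0
  | a :: c, v => a * v.headD 0 + listDot c v.tail

/-- The lists of length `m + 1` with entries `0`, `1`, `2` and last entry `1`. -/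
def coeffLists : ℕ → List (List ℕ)
  | 0 => [[1]]
  | m + 1 => (coeffLists m).flatMap fun c => [0, 1, 2].map (· :: c)

/-- The `c ∈ coeffLists m` with `listDot c v % 3 ≠ 0` for all `v ∈ X`. The tail of `c` is chosen
first, subject to the conditions that do not involve the head of `c`. -/
def avoiding : ℕ → List (List ℕ) → List (List ℕ)
  | 0, X => [[1]].filter fun c => ∀ v ∈ X, listDot c v % 3 ≠ 0
  | m + 1, X =>
    (avoiding m ((X.filter fun v => v.headD 0 = 0).map List.tail)).flatMap fun c =>
      ([0, 1, 2].map (· :: c)).filter fun c => ∀ v ∈ X, v.headD 0 = 0 ∨ listDot c v % 3 ≠ 0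

theorem mem_avoiding {m : ℕ} {X : List (List ℕ)} {c : List ℕ} :
    c ∈ avoiding m X ↔ c ∈ coeffLists m ∧ ∀ v ∈ X, listDot c v % 3 ≠ 0 := by
  induction m generalizing X c with
  | zero => simp only [avoiding, coeffLists, List.mem_filter, decide_eq_true_eq]
  | succ m ih =>
    have split (t : ℕ) (c : List ℕ) : (∀ v ∈ X, listDot (t :: c) v % 3 ≠ 0) ↔
        (∀ v ∈ (X.filter fun v => v.headD 0 = 0).map List.tail, listDot c v % 3 ≠ 0) ∧
          ∀ v ∈ X, v.headD 0 = 0 ∨ listDot (t :: c) v % 3 ≠ 0 := by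
      have head {v : List ℕ} (hv : v.headD 0 = 0) : listDot (t :: c) v = listDot c v.tail := by
        simp only [listDot, hv, mul_zero, zero_add]
      simp only [List.forall_mem_map, List.mem_filter, decide_eq_true_eq]
      constructor
      · exact fun h => ⟨fun v hv => head hv.2 ▸ h v hv.1, fun v hv => .inr (h v hv)⟩
      · rintro ⟨htail, hhead⟩ v hv
        by_cases h0 : v.headD 0 = 0
        · exact head h0 ▸ htail v ⟨hv, h0⟩
        · exact (hhead v hv).resolve_left h0
    rw [avoiding, coeffLists, List.mem_flatMap, List.mem_flatMap]
    constructor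
    · rintro ⟨c, hc, hct⟩
      obtain ⟨ht, hhead⟩ := List.mem_filter.1 hct
      obtain ⟨t, -, rfl⟩ := List.mem_map.1 ht
      exact ⟨⟨c, (ih.1 hc).1, ht⟩, (split t c).2 ⟨(ih.1 hc).2, of_decide_eq_true hhead⟩⟩
    · rintro ⟨⟨c, hc, ht⟩, h⟩
      obtain ⟨t, -, rfl⟩ := List.mem_map.1 ht
      obtain ⟨htail, hhead⟩ := (split t c).1 h
      exact ⟨c, ih.2 ⟨hc, htail⟩, List.mem_filter.2 ⟨ht, decide_eq_true hhead⟩⟩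

theorem map_val_append_mem_coeffLists (l : List (ZMod 3)) :
    l.map ZMod.val ++ [1] ∈ coeffLists l.length := by
  induction l with
  | nil => exact List.mem_singleton_self _
  | cons t l ih =>
    have digit : ∀ t : ZMod 3, t.val ∈ [0, 1, 2] := by decide
    exact List.mem_flatMap.2 ⟨_, ih, List.mem_map.2 ⟨_, digit t, rfl⟩⟩

theorem natCast_listDot_map_val (c : List ℕ) (l : List (ZMod 3)) :
    (listDot c (l.map ZMod.val) : ZMod 3) = ∑ i ∈ range l.length, c.getD i 0 * l.getD i 0 := by
  induction c generalizing l with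
  | nil => simp [listDot]
  | cons a c ih =>
    cases l with
    | nil => simpa [listDot] using ih []
    | cons t l =>
      rw [List.length_cons, sum_range_succ', List.map_cons, listDot, Nat.cast_add, List.tail_cons,
        ih l]
      simp [add_comm]

end CoefficientLists

section QuadraticForms

/-- The monomials in the order used by `quadForm`. The square of `x 0` comes last, since its
coefficient is normalized to `1`. -/
def monomials (x : Fin 4 → ZMod 3) : List ℕ :=
  [x 3 * x 2, x 3 * x 1, x 3 * x 0, x 3 * x 3, x 2 * x 1, x 2 * x 0, x 2 * x 2, x 1 * x 0,
    x 1 * x 1, x 0 * x 0].map ZMod.val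

/-- The quadratic form with coefficient list `c`. -/
def quadForm (c : List ℕ) (x : Fin 4 → ZMod 3) : ℕ := listDot c (monomials x) % 3

theorem natCast_quadForm (c : List ℕ) (x : Fin 4 → ZMod 3) :
    (quadForm c x : ZMod 3) =
      c.getD 0 0 * (x 3 * x 2) + c.getD 1 0 * (x 3 * x 1) + c.getD 2 0 * (x 3 * x 0) +
      c.getD 3 0 * (x 3 * x 3) + c.getD 4 0 * (x 2 * x 1) + c.getD 5 0 * (x 2 * x 0) +
      c.getD 6 0 * (x 2 * x 2) + c.getD 7 0 * (x 1 * x 0) + c.getD 8 0 * (x 1 * x 1) +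
      c.getD 9 0 * (x 0 * x 0) := by
  rw [quadForm, ZMod.natCast_mod, monomials, natCast_listDot_map_val]
  simp only [List.length_cons, List.length_nil, sum_range_succ, sum_range_zero, zero_add]
  rfl

theorem quadForm_eq_zero_iff (c : List ℕ) (x : Fin 4 → ZMod 3) :
    quadForm c x = 0 ↔ (quadForm c x : ZMod 3) = 0 := by
  rw [ZMod.natCast_eq_zero_iff, quadForm]
  omega

theorem quadForm_parallelogram (c : List ℕ) (x y : Fin 4 → ZMod 3) :
    (quadForm c (x + y) + quadForm c (x - y) : ZMod 3) =
      2 * quadForm c x + 2 * quadForm c y := by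
  simp only [natCast_quadForm, Pi.add_apply, Pi.sub_apply]
  ring

theorem exists_quadForm_eq_zero_iff (L : (Fin 4 → ZMod 3) →ₗ[ZMod 3] (Fin 4 → ZMod 3))
    (h0 : ellipticForm (L (Pi.single 0 1)) ≠ 0) :
    ∃ c ∈ coeffLists 9, ∀ x, quadForm c x = 0 ↔ ellipticForm (L x) = 0 := by
  let u (i : Fin 4) : Fin 4 → ZMod 3 := L (Pi.single i 1)
  let q := ellipticForm (u 0)
  let B (i j : Fin 4) := QuadraticMap.polar ellipticForm (u i) (u j)
  let l : List (ZMod 3) := [q * B 3 2, q * B 3 1, q * B 3 0, q * ellipticForm (u 3), q * B 2 1,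
    q * B 2 0, q * ellipticForm (u 2), q * B 1 0, q * ellipticForm (u 1)]
  have hq : q * q = 1 := by
    have mul_self_eq_one : ∀ t : ZMod 3, t ≠ 0 → t * t = 1 := by decide
    exact mul_self_eq_one _ h0
  refine ⟨_, map_val_append_mem_coeffLists l, fun x => ?_⟩
  have cast : (quadForm (l.map ZMod.val ++ [1]) x : ZMod 3) = q * ellipticForm (L x) := by
    have hL : L x = x 0 • u 0 + x 1 • u 1 + x 2 • u 2 + x 3 • u 3 := by
      conv_lhs => rw [pi_eq_sum_univ' x]
      simp only [Fin.sum_univ_four, map_add, map_smul, u]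
    have expand : ellipticForm (L x) = x 0 * x 0 * q + x 1 * x 1 * ellipticForm (u 1) +
        x 2 * x 2 * ellipticForm (u 2) + x 3 * x 3 * ellipticForm (u 3) + x 3 * x 2 * B 3 2 +
        x 3 * x 1 * B 3 1 + x 3 * x 0 * B 3 0 + x 2 * x 1 * B 2 1 + x 2 * x 0 * B 2 0 +
        x 1 * x 0 * B 1 0 := by
      rw [hL]
      simp only [q, B, QuadraticMap.polar, ellipticForm, Pi.add_apply, Pi.smul_apply, smul_eq_mul]
      ring
    rw [natCast_quadForm, expand]
    simp only [l, List.map_cons, List.map_nil, List.cons_append, List.nil_append,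
      List.getD_cons_zero, List.getD_cons_succ, ZMod.natCast_zmod_val, Nat.cast_one, one_mul]
    linear_combination - (x 0 * x 0) * hq
  rw [quadForm_eq_zero_iff, cast, mul_eq_zero, or_iff_right h0]

end QuadraticForms

section DisjointCones

/-- The points of `AG(4,3)`, as a list. -/
def points : List (Fin 4 → ZMod 3) := do
  let a ← [0, 1, 2]
  let b ← [0, 1, 2]
  let c ← [0, 1, 2]
  let d ← [0, 1, 2]
  return ![a, b, c, d]

theorem mem_points (x : Fin 4 → ZMod 3) : x ∈ points := by
  have digit : ∀ t : ZMod 3, t ∈ [0, 1, 2] := by decide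
  simp only [points, List.bind_eq_flatMap, List.pure_def, List.mem_flatMap, List.mem_singleton]
  exact ⟨_, digit (x 0), _, digit (x 1), _, digit (x 2), _, digit (x 3), List.ofFn_inj.1 rfl⟩

/-- The representatives of the points of `PG(3,3)` whose first nonzero coordinate is `1`. -/
def projectivePoints : List (Fin 4 → ZMod 3) :=
  points.filter fun x => x 0 = 1 ∨ x 0 = 0 ∧ (x 1 = 1 ∨ x 1 = 0 ∧ (x 2 = 1 ∨ x 2 = 0 ∧ x 3 = 1))

theorem mem_projectivePoints_or_neg_mem : ∀ x : Fin 4 → ZMod 3, x ≠ 0 →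
    x ∈ projectivePoints ∨ -x ∈ projectivePoints := by
  decide +kernel

theorem ne_zero_and_neg_notMem_of_mem_projectivePoints : ∀ x ∈ projectivePoints,
    x ≠ 0 ∧ -x ∉ projectivePoints := by
  decide +kernel

theorem nodup_projectivePoints : projectivePoints.Nodup := by decide +kernel

/-- The nonzero zeros of a quadratic form. -/
def zeroSet (c : List ℕ) : Finset (Fin 4 → ZMod 3) := {x | x ≠ 0 ∧ quadForm c x = 0}

/-- The zeros of a quadratic form in `PG(3,3)`. -/
def projectiveZeros (c : List ℕ) : List (Fin 4 → ZMod 3) :=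
  projectivePoints.filter (quadForm c · = 0)

theorem mem_zeroSet {c : List ℕ} {x : Fin 4 → ZMod 3} :
    x ∈ zeroSet c ↔ x ≠ 0 ∧ quadForm c x = 0 := by
  simp [zeroSet]

theorem quadForm_neg (c : List ℕ) (x : Fin 4 → ZMod 3) : quadForm c (-x) = quadForm c x := by
  rw [quadForm, monomials]
  simp only [Pi.neg_apply, neg_mul_neg]
  rfl

theorem card_zeroSet (c : List ℕ) : #(zeroSet c) = 2 * (projectiveZeros c).length := by
  let Z := (projectiveZeros c).toFinset
  have mem_Z {x} : x ∈ Z ↔ x ∈ projectivePoints ∧ quadForm c x = 0 := by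
    simp [Z, projectiveZeros]
  have hunion : zeroSet c = Z ∪ Z.map (Equiv.neg _).toEmbedding := by
    ext x
    rw [mem_union, mem_map_equiv, mem_Z, mem_Z, mem_zeroSet]
    simp only [Equiv.neg_symm, Equiv.neg_apply, quadForm_neg, ← or_and_right]
    refine and_congr_left fun _ => ⟨mem_projectivePoints_or_neg_mem x, ?_⟩
    rintro (hx | hx)
    · exact (ne_zero_and_neg_notMem_of_mem_projectivePoints x hx).1
    · exact neg_ne_zero.1 (ne_zero_and_neg_notMem_of_mem_projectivePoints _ hx).1
  have hdisj : Disjoint Z (Z.map (Equiv.neg _).toEmbedding) := disjoint_left.2 fun x hx hx' => by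
    rw [mem_map_equiv, mem_Z] at hx'
    exact (ne_zero_and_neg_notMem_of_mem_projectivePoints x (mem_Z.1 hx).1).2 hx'.1
  have hcard : #Z = (projectiveZeros c).length :=
    List.toFinset_card_of_nodup (nodup_projectivePoints.filter _)
  rw [hunion, card_union_of_disjoint hdisj, card_map, ← two_mul, hcard]

/-- The normalized quadratic forms `c` such that `quadForm c (x - a)` vanishes at no point
`x ≠ a` of `ellipticCone`. -/
def formsAvoiding (a : Fin 4 → ZMod 3) : List (List ℕ) :=
  avoiding 9 ((points.filter fun x => x ∈ ellipticCone ∧ x ≠ a).map fun x => monomials (x - a))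

theorem mem_formsAvoiding {a : Fin 4 → ZMod 3} {c : List ℕ} : c ∈ formsAvoiding a ↔
    c ∈ coeffLists 9 ∧ ∀ x ∈ ellipticCone, x - a ∉ zeroSet c := by
  simp only [formsAvoiding, mem_avoiding, List.forall_mem_map, List.mem_filter, mem_points,
    decide_eq_true_eq, true_and, mem_zeroSet, sub_ne_zero, not_and, quadForm, and_imp]

theorem HasAnchor.exists_mem_formsAvoiding {D : Finset (Fin 4 → ZMod 3)} {a : Fin 4 → ZMod 3}
    (hD : HasAnchor D a) (hdisj : Disjoint ellipticCone D)
    (ha : a + Pi.single 0 1 ∈ ellipticCone ∨ a - Pi.single 0 1 ∈ ellipticCone) :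
    ∃ c ∈ formsAvoiding a, ∀ x, x ∈ D ↔ x - a ∈ zeroSet c := by
  obtain ⟨L, hL⟩ := hD
  have mem_cone (x) : L x ∈ ellipticCone ↔ x ≠ 0 ∧ ellipticForm (L x) = 0 := by
    simp [ellipticCone]
  have h0 : ellipticForm (L (Pi.single 0 1)) ≠ 0 := fun h => by
    have even (y) : ellipticForm (-y) = ellipticForm y := by simp [ellipticForm]
    rcases ha with ha | ha
    · refine disjoint_left.1 hdisj ha ((hL _).2 ?_)
      rw [add_sub_cancel_left, mem_cone]
      exact ⟨by simp, h⟩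
    · refine disjoint_left.1 hdisj ha ((hL _).2 ?_)
      rw [sub_sub_cancel_left, mem_cone, map_neg, even]
      exact ⟨by simp, h⟩
  obtain ⟨c, hc, hcL⟩ := exists_quadForm_eq_zero_iff L.toLinearMap h0
  have hDc (x) : x ∈ D ↔ x - a ∈ zeroSet c := by
    rw [hL, mem_cone, mem_zeroSet, hcL, LinearEquiv.coe_coe]
  exact ⟨c, mem_formsAvoiding.2 ⟨hc, fun x hx => mt (hDc x).2 (disjoint_left.1 hdisj hx)⟩, hDc⟩

theorem length_projectiveZeros_ne_ten : ∀ a ∈ orbitRepresentatives, ∀ c ∈ formsAvoiding a,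
    (projectiveZeros c).length ≠ 10 := by
  decide +kernel

theorem HasAnchor.length_projectiveZeros {D : Finset (Fin 4 → ZMod 3)} {a : Fin 4 → ZMod 3}
    (hD : HasAnchor D a) {c : List ℕ} (hc : ∀ x, x ∈ D ↔ x - a ∈ zeroSet c) :
    (projectiveZeros c).length = 10 := by
  have hcard := hD.card_eq
  rw [card_equiv (Equiv.subRight a) hc, card_zeroSet] at hcard
  omega

theorem HasAnchor.eq_zero_of_disjoint {D : Finset (Fin 4 → ZMod 3)} {a : Fin 4 → ZMod 3}
    (hD : HasAnchor D a) (hdisj : Disjoint ellipticCone D) : a = 0 := by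
  by_contra ha
  obtain ⟨v, hv, r, hr, hw, hvw⟩ := exists_reflection_reflection_eq a ha
  obtain ⟨D₁, hD₁, hdisj₁⟩ := hD.exists_reflection hdisj hv
  obtain ⟨D₂, hD₂, hdisj₂⟩ := hD₁.exists_reflection hdisj₁ hw
  rw [hvw] at hD₂
  have tangent : ∀ r ∈ orbitRepresentatives,
      r + Pi.single 0 1 ∈ ellipticCone ∨ r - Pi.single 0 1 ∈ ellipticCone := by
    decide +kernel
  obtain ⟨c, hc, hDc⟩ := hD₂.exists_mem_formsAvoiding hdisj₂ (tangent r hr)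
  exact length_projectiveZeros_ne_ten r hr c hc (hD₂.length_projectiveZeros hDc)

end DisjointCones

section Cliques

/-- The `k`-element subsets of `s` whose distinct elements are related by `r`. -/
noncomputable def cliques {α : Type*} (r : α → α → Prop) (k : ℕ) (s : Finset α) :
    Finset (Finset α) :=
  open Classical in {t ∈ s.powersetCard k | (t : Set α).Pairwise r}

theorem mem_cliques {α : Type*} {r : α → α → Prop} {k : ℕ} {s t : Finset α} :
    t ∈ cliques r k s ↔ t ⊆ s ∧ #t = k ∧ (t : Set α).Pairwise r := by
  simp only [cliques, mem_filter, mem_powersetCard, and_assoc]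

section Image

variable {α β : Type*} [DecidableEq β] {r : α → α → Prop} {r' : β → β → Prop} {f : α → β}
  {s : Finset α}

theorem cliques_image (hf : Set.InjOn f s) (hr : ∀ x ∈ s, ∀ y ∈ s, r' (f x) (f y) ↔ r x y)
    (k : ℕ) : cliques r' k (s.image f) = (cliques r k s).image (image f) := by
  have image_mem {t} (ht : t ⊆ s) : t.image f ∈ cliques r' k (s.image f) ↔ t ∈ cliques r k s := by
    rw [mem_cliques, mem_cliques, card_image_of_injOn (hf.mono ht), coe_image,
      (hf.mono ht).pairwise_image]
    refine and_congr (iff_of_true (image_subset_image ht) ht) (and_congr_right fun _ => ?_)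
    exact ⟨fun h x hx y hy hxy => (hr x (ht hx) y (ht hy)).1 (h hx hy hxy),
      fun h x hx y hy hxy => (hr x (ht hx) y (ht hy)).2 (h hx hy hxy)⟩
  ext u
  rw [mem_image]
  constructor
  · intro hu
    obtain ⟨t, ht, rfl⟩ := subset_image_iff.1 (mem_cliques.1 hu).1
    exact ⟨t, (image_mem ht).1 hu, rfl⟩
  · rintro ⟨t, ht, rfl⟩
    exact (image_mem (mem_cliques.1 ht).1).2 ht

theorem card_cliques_image (hf : Set.InjOn f s) (hr : ∀ x ∈ s, ∀ y ∈ s, r' (f x) (f y) ↔ r x y)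
    (k : ℕ) : #(cliques r' k (s.image f)) = #(cliques r k s) := by
  rw [cliques_image hf hr, card_image_of_injOn]
  exact (image_injOn_powerset_of_injOn hf).mono fun t ht =>
    mem_powerset.2 (mem_cliques.1 ht).1

theorem forall_exists_mem_cliques_image (hf : Set.InjOn f s)
    (hr : ∀ x ∈ s, ∀ y ∈ s, r' (f x) (f y) ↔ r x y) (k : ℕ) :
    (∀ y ∈ s.image f, ∃ t ∈ cliques r' k (s.image f), y ∈ t) ↔
      ∀ x ∈ s, ∃ t ∈ cliques r k s, x ∈ t := by
  rw [cliques_image hf hr, forall_mem_image]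
  refine forall₂_congr fun x hx => exists_mem_image.trans (exists_congr fun t => ?_)
  refine and_congr_right fun ht => ⟨fun h => ?_, mem_image_of_mem f⟩
  obtain ⟨y, hy, hyx⟩ := mem_image.1 h
  exact hf ((mem_cliques.1 ht).1 hy) hx hyx ▸ hy

end Image

theorem card_cliques_insert {α : Type*} [DecidableEq α] {r : α → α → Prop} [DecidableRel r]
    [Std.Symm r] {a : α} {s : Finset α} (ha : a ∉ s) (k : ℕ) :
    #(cliques r (k + 1) (insert a s)) =
      #(cliques r k (s.filter (r a))) + #(cliques r (k + 1) s) := by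
  have pairwise_insert {u : Finset α} (hu : u ⊆ s) : (↑(insert a u) : Set α).Pairwise r ↔
      (u : Set α).Pairwise r ∧ ∀ x ∈ u, r a x := by
    rw [coe_insert, Set.pairwise_insert_of_symm_of_notMem (mt (@hu a) ha)]
    rfl
  have hunion : cliques r (k + 1) (insert a s) =
      cliques r (k + 1) s ∪ (cliques r k (s.filter (r a))).image (insert a) := by
    ext t
    simp only [cliques, powersetCard_succ_insert ha, filter_union, filter_image, mem_union,
      mem_image, mem_filter, mem_powersetCard]
    refine or_congr_right (exists_congr fun u => and_congr_left fun _ => ?_)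
    have subset_filter : u ⊆ s.filter (r a) ↔ u ⊆ s ∧ ∀ x ∈ u, r a x := by
      simp only [subset_iff, mem_filter, imp_and, forall_and]
    rw [subset_filter]
    refine ⟨fun ⟨⟨hu, hk⟩, h⟩ => ?_, fun ⟨⟨⟨hu, hr⟩, hk⟩, h⟩ => ?_⟩
    · obtain ⟨h, hr⟩ := (pairwise_insert hu).1 h
      exact ⟨⟨⟨hu, hr⟩, hk⟩, h⟩
    · exact ⟨⟨hu, hk⟩, (pairwise_insert hu).2 ⟨h, hr⟩⟩
  have hdisj : Disjoint (cliques r (k + 1) s)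
      ((cliques r k (s.filter (r a))).image (insert a)) := by
    refine disjoint_left.2 fun t ht ht' => ?_
    obtain ⟨u, -, rfl⟩ := mem_image.1 ht'
    exact ha ((mem_cliques.1 ht).1 (mem_insert_self a u))
  have hinj : Set.InjOn (insert a) (cliques r k (s.filter (r a)) : Set (Finset α)) := by
    have notMem {u} (hu : u ∈ cliques r k (s.filter (r a))) : a ∉ u := fun h =>
      ha (mem_filter.1 ((mem_cliques.1 hu).1 h)).1
    exact fun t ht u hu h => by
      rw [← erase_insert (notMem ht), h, erase_insert (notMem hu)]
  rw [hunion, card_union_of_disjoint hdisj, card_image_of_injOn hinj, add_comm]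

/-- The number of `k`-cliques of the relation `r` on a list. -/
def countCliques {α : Type*} (r : α → α → Prop) [DecidableRel r] : ℕ → List α → ℕ
  | 0, _ => 1
  | k + 1, l => (l.tails.map fun
    | [] => 0
    | a :: t => countCliques r k (t.filter (r a))).sum

theorem card_cliques_toFinset {α : Type*} [DecidableEq α] {r : α → α → Prop} [DecidableRel r]
    [Std.Symm r] (k : ℕ) {l : List α} (hl : l.Nodup) :
    #(cliques r k l.toFinset) = countCliques r k l := by
  induction k generalizing l with
  | zero => simp [cliques, countCliques, filter_singleton]
  | succ k ihk =>
    induction l with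
    | nil => simp [cliques, countCliques]
    | cons a l ihl =>
      obtain ⟨ha, hl⟩ := List.nodup_cons.1 hl
      rw [List.toFinset_cons, card_cliques_insert (by rwa [List.mem_toFinset]), ihl hl,
        List.filter_toFinset, ihk (hl.filter _)]
      simp only [countCliques, List.tails_cons, List.map_cons, List.sum_cons]

end Cliques

section Codes

/-- The truth values of `p` along a list, as binary digits. -/
def bits {α : Type*} (p : α → Prop) [DecidablePred p] : List α → ℕ
  | [] => 0
  | x :: l => Nat.bit (p x) (bits p l)

theorem bits_eq_bits_iff {α : Type*} {p q : α → Prop} [DecidablePred p] [DecidablePred q]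
    {l : List α} : bits p l = bits q l ↔ ∀ x ∈ l, p x ↔ q x := by
  induction l with
  | nil => simp [bits]
  | cons x l ih =>
    have bit_eq_bit (a b : Bool) (m n : ℕ) : Nat.bit a m = Nat.bit b n ↔ a = b ∧ m = n := by
      cases a <;> cases b <;> simp [Nat.bit_val] <;> omega
    simp [bits, bit_eq_bit, ih]

theorem bits_land_bits_eq_zero_iff {α : Type*} {p q : α → Prop} [DecidablePred p] [DecidablePred q]
    {l : List α} : bits p l &&& bits q l = 0 ↔ ∀ x ∈ l, ¬(p x ∧ q x) := by
  induction l with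
  | nil => simp [bits]
  | cons x l ih => simp [bits, Nat.land_bit, Nat.bit_eq_zero_iff, ih, and_comm]

end Codes

section EllipticForms

theorem quadForm_sub_eq_zero_iff {c : List ℕ} {x y : Fin 4 → ZMod 3} (hx : quadForm c x = 0)
    (hy : quadForm c y = 0) : quadForm c (x - y) = 0 ↔ quadForm c (x + y) = 0 := by
  have h := quadForm_parallelogram c x y
  rw [hx, hy, Nat.cast_zero, mul_zero, add_zero] at h
  rw [quadForm_eq_zero_iff, quadForm_eq_zero_iff, eq_neg_of_add_eq_zero_left h, neg_eq_zero]

theorem isCap_zeroSet_iff_forall_add_notMem {c : List ℕ} : IsCap (zeroSet c) ↔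
    ∀ x ∈ zeroSet c, ∀ y ∈ zeroSet c, x ≠ y → x + y ∉ zeroSet c := by
  have neg_mem {x} : -x ∈ zeroSet c ↔ x ∈ zeroSet c := by
    rw [mem_zeroSet, mem_zeroSet, neg_ne_zero, quadForm_neg]
  refine ⟨fun h x hx y hy hxy hz => ?_, fun h x hx y hy z hz hxy _ _ hsum => ?_⟩
  · refine h x hx y hy _ (neg_mem.2 hz) hxy (fun hxz => hxy ?_) (fun hyz => hxy ?_)
      (add_neg_cancel _)
    · linear_combination - hxz + add_add_self_eq_zero x
    · linear_combination hyz - add_add_self_eq_zero y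
  · exact h x hx y hy hxy (neg_mem.1 (eq_neg_of_add_eq_zero_right hsum ▸ hz))

theorem isCap_zeroSet_iff {c : List ℕ} : IsCap (zeroSet c) ↔
    (projectiveZeros c).Pairwise fun x y => quadForm c (x + y) ≠ 0 := by
  have mem_projectiveZeros {x} : x ∈ projectiveZeros c ↔
      x ∈ projectivePoints ∧ quadForm c x = 0 := by
    simp only [projectiveZeros, List.mem_filter, decide_eq_true_eq]
  rw [isCap_zeroSet_iff_forall_add_notMem]
  constructor
  · refine fun h => (nodup_projectivePoints.filter _).pairwise_of_forall_ne ?_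
    intro x hx y hy hxy hzero
    obtain ⟨⟨hx, hx0⟩, hy, hy0⟩ := And.intro (mem_projectiveZeros.1 hx) (mem_projectiveZeros.1 hy)
    obtain ⟨hx_ne, hx_neg⟩ := ne_zero_and_neg_notMem_of_mem_projectivePoints x hx
    obtain ⟨hy_ne, -⟩ := ne_zero_and_neg_notMem_of_mem_projectivePoints y hy
    refine h x (mem_zeroSet.2 ⟨hx_ne, hx0⟩) y (mem_zeroSet.2 ⟨hy_ne, hy0⟩) hxy
      (mem_zeroSet.2 ⟨fun hsum => hx_neg ?_, hzero⟩)
    rwa [← eq_neg_of_add_eq_zero_right hsum]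
  · intro h x hx y hy hxy hmem
    obtain ⟨hsum, hzero⟩ := mem_zeroSet.1 hmem
    have symm : Std.Symm fun x y => quadForm c (x + y) ≠ 0 := ⟨fun x y h => by rwa [add_comm]⟩
    have add_ne {p q} (hp : p ∈ projectiveZeros c) (hq : q ∈ projectiveZeros c) (hpq : p ≠ q) :
        quadForm c (p + q) ≠ 0 := h.forall hp hq hpq
    have sub_ne {p q} (hp : p ∈ projectiveZeros c) (hq : q ∈ projectiveZeros c) (hpq : p ≠ q) :
        quadForm c (p - q) ≠ 0 :=
      mt (quadForm_sub_eq_zero_iff (mem_projectiveZeros.1 hp).2 (mem_projectiveZeros.1 hq).2).1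
        (add_ne hp hq hpq)
    have mem_or_neg_mem {x} (hx : x ∈ zeroSet c) :
        x ∈ projectiveZeros c ∨ -x ∈ projectiveZeros c := by
      obtain ⟨hx, hx0⟩ := mem_zeroSet.1 hx
      simpa only [mem_projectiveZeros, quadForm_neg, hx0, and_true] using
        mem_projectivePoints_or_neg_mem x hx
    have hxy' : x ≠ -y := fun h => hsum (by rw [h, neg_add_cancel])
    rcases mem_or_neg_mem hx with hp | hp <;> rcases mem_or_neg_mem hy with hq | hq
    · exact add_ne hp hq hxy hzero
    · exact sub_ne hp hq hxy' (by rwa [sub_neg_eq_add])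
    · exact sub_ne hp hq (neg_eq_iff_eq_neg.not.2 hxy')
        (by rwa [← neg_add', quadForm_neg])
    · exact add_ne hp hq (neg_inj.not.2 hxy) (by rwa [← neg_add, quadForm_neg])

/-- The normalized forms whose nonzero zeros are a cap of size `20` disjoint from
`ellipticCone`. -/
def ellipticForms : List (List ℕ) :=
  (formsAvoiding 0).filter fun c => (projectiveZeros c).length = 10 ∧
    (projectiveZeros c).Pairwise fun x y => quadForm c (x + y) ≠ 0

theorem mem_ellipticForms {c : List ℕ} : c ∈ ellipticForms ↔
    c ∈ formsAvoiding 0 ∧ MaximalCap (zeroSet c) := by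
  rw [ellipticForms, List.mem_filter, maximalCap_iff, isCap_zeroSet_iff, card_zeroSet]
  simp only [decide_eq_true_eq, and_comm (a := _ = 10)]
  refine and_congr_right fun _ => and_congr_right fun _ => ?_
  omega

theorem exists_mem_ellipticForms_iff {T : Finset (Fin 4 → ZMod 3)} :
    (∃ c ∈ ellipticForms, zeroSet c = T) ↔ MaximalCap T ∧ Disjoint ellipticCone T := by
  constructor
  · rintro ⟨c, hc, rfl⟩
    obtain ⟨hc, hmax⟩ := mem_ellipticForms.1 hc
    refine ⟨hmax, disjoint_left.2 fun x hx => ?_⟩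
    simpa only [sub_zero] using (mem_formsAvoiding.1 hc).2 x hx
  · rintro ⟨hT, hdisj⟩
    obtain ⟨hcap, hcard⟩ := maximalCap_iff.1 hT
    obtain ⟨a, ha⟩ := hcap.exists_hasAnchor hcard
    obtain rfl := ha.eq_zero_of_disjoint hdisj
    obtain ⟨c, hc, hTc⟩ := ha.exists_mem_formsAvoiding hdisj (.inl (by decide))
    have hTc : zeroSet c = T := ext fun x => by rw [hTc, sub_zero]
    exact ⟨c, mem_ellipticForms.2 ⟨hc, hTc ▸ hT⟩, hTc⟩

/-- The set of zeros of a quadratic form in `PG(3,3)`, as a bit mask. -/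
def zeroCode (c : List ℕ) : ℕ := bits (quadForm c · = 0) projectivePoints

theorem forall_mem_projectivePoints_iff {p : (Fin 4 → ZMod 3) → Prop} (hp : ∀ x, p (-x) ↔ p x) :
    (∀ x ∈ projectivePoints, p x) ↔ ∀ x, x ≠ 0 → p x := by
  refine ⟨fun h x hx => ?_, fun h x hx =>
    h x (ne_zero_and_neg_notMem_of_mem_projectivePoints x hx).1⟩
  exact (mem_projectivePoints_or_neg_mem x hx).elim (h x) fun hx => (hp x).1 (h _ hx)

theorem zeroCode_eq_zeroCode_iff {c c' : List ℕ} :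
    zeroCode c = zeroCode c' ↔ zeroSet c = zeroSet c' := by
  rw [zeroCode, zeroCode, bits_eq_bits_iff,
    forall_mem_projectivePoints_iff fun x => by simp only [quadForm_neg]]
  simp only [Finset.ext_iff, mem_zeroSet, and_congr_right_iff]

theorem zeroCode_land_zeroCode_eq_zero_iff {c c' : List ℕ} :
    zeroCode c &&& zeroCode c' = 0 ↔ Disjoint (zeroSet c) (zeroSet c') := by
  rw [zeroCode, zeroCode, bits_land_bits_eq_zero_iff,
    forall_mem_projectivePoints_iff fun x => by simp only [quadForm_neg]]
  simp only [disjoint_left, mem_zeroSet]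
  grind

/-- The bit masks of the caps of size `20` disjoint from `ellipticCone`. -/
def zeroCodes : List ℕ := ellipticForms.map zeroCode

theorem nodup_zeroCodes : zeroCodes.Nodup := by decide +kernel

theorem countCliques_zeroCodes : countCliques (fun a b => a &&& b = 0) 3 zeroCodes = 216 := by
  decide +kernel

theorem exists_disjoint_zeroCodes : ∀ a ∈ zeroCodes, ∃ b ∈ zeroCodes, a &&& b = 0 ∧
    ∃ c ∈ zeroCodes, a &&& c = 0 ∧ b &&& c = 0 := by
  decide +kernel

theorem injOn_zeroCode : Set.InjOn zeroCode (ellipticForms.toFinset : Set (List ℕ)) :=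
  fun _ hc _ hc' => List.inj_on_of_nodup_map nodup_zeroCodes (List.mem_toFinset.1 hc)
    (List.mem_toFinset.1 hc')

end EllipticForms

section DisjointCaps

/-- The maximal caps disjoint from `S`. -/
noncomputable def disjointCaps (S : Finset (Fin 4 → ZMod 3)) :
    Finset (Finset (Fin 4 → ZMod 3)) :=
  open Classical in {T | MaximalCap T ∧ Disjoint S T}

theorem mem_disjointCaps {S T : Finset (Fin 4 → ZMod 3)} :
    T ∈ disjointCaps S ↔ MaximalCap T ∧ Disjoint S T := by
  simp [disjointCaps]

theorem disjointCaps_ellipticCone :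
    disjointCaps ellipticCone = ellipticForms.toFinset.image zeroSet := by
  ext T
  simp only [mem_disjointCaps, mem_image, List.mem_toFinset, exists_mem_ellipticForms_iff]

theorem MaximalCap.nonempty {S : Finset (Fin 4 → ZMod 3)} (hS : MaximalCap S) : S.Nonempty :=
  card_pos.1 ((maximalCap_iff.1 hS).2 ▸ by norm_num)

theorem MaximalCap.ne_of_disjoint {S T : Finset (Fin 4 → ZMod 3)} (hS : MaximalCap S)
    (h : Disjoint S T) : S ≠ T :=
  h.ne hS.nonempty.ne_empty

theorem card_cliques_disjointCaps_ellipticCone :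
    #(cliques Disjoint 3 (disjointCaps ellipticCone)) = 216 := by
  have injOn_zeroSet : Set.InjOn zeroSet (ellipticForms.toFinset : Set (List ℕ)) :=
    fun c hc c' hc' h => injOn_zeroCode hc hc' (zeroCode_eq_zeroCode_iff.2 h)
  have symm : Std.Symm fun a b : ℕ => a &&& b = 0 := ⟨fun a b h => by rwa [Nat.land_comm]⟩
  have image_zeroCode : ellipticForms.toFinset.image zeroCode = zeroCodes.toFinset := by
    ext; simp [zeroCodes]
  calc #(cliques Disjoint 3 (disjointCaps ellipticCone))
      = #(cliques (fun c c' => zeroCode c &&& zeroCode c' = 0) 3 ellipticForms.toFinset) := by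
        rw [disjointCaps_ellipticCone, card_cliques_image injOn_zeroSet fun c _ c' _ =>
          zeroCode_land_zeroCode_eq_zero_iff.symm]
    _ = #(cliques (fun a b => a &&& b = 0) 3 zeroCodes.toFinset) := by
        rw [← image_zeroCode, card_cliques_image injOn_zeroCode fun _ _ _ _ => Iff.rfl]
    _ = 216 := by rw [card_cliques_toFinset 3 nodup_zeroCodes, countCliques_zeroCodes]

theorem exists_mem_cliques_disjointCaps_ellipticCone :
    ∀ T ∈ disjointCaps ellipticCone,
      ∃ t ∈ cliques Disjoint 3 (disjointCaps ellipticCone), T ∈ t := by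
  intro T hT
  obtain ⟨U, hU, hTU, V, hV, hTV, hUV⟩ : ∃ U ∈ disjointCaps ellipticCone, Disjoint T U ∧
      ∃ V ∈ disjointCaps ellipticCone, Disjoint T V ∧ Disjoint U V := by
    simp only [disjointCaps_ellipticCone, mem_image, List.mem_toFinset] at hT ⊢
    obtain ⟨c, hc, rfl⟩ := hT
    obtain ⟨_, hb, hcb, _, ha, hca, hba⟩ := exists_disjoint_zeroCodes _ (List.mem_map_of_mem hc)
    obtain ⟨⟨u, hu, rfl⟩, v, hv, rfl⟩ := And.intro (List.mem_map.1 hb) (List.mem_map.1 ha)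
    simp only [zeroCode_land_zeroCode_eq_zero_iff] at hcb hca hba
    exact ⟨_, ⟨u, hu, rfl⟩, hcb, _, ⟨v, hv, rfl⟩, hca, hba⟩
  have ne {X Y} (hX : X ∈ disjointCaps ellipticCone) (h : Disjoint X Y) : X ≠ Y :=
    (mem_disjointCaps.1 hX).1.ne_of_disjoint h
  refine ⟨{T, U, V}, mem_cliques.2 ⟨?_, ?_, ?_⟩, mem_insert_self T _⟩
  · simp [insert_subset_iff, hT, hU, hV]
  · exact card_eq_three.2 ⟨T, U, V, ne hT hTU, ne hT hTV, ne hU hUV, rfl⟩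
  · simp [Set.pairwise_insert, hTU, hTV, hUV, hTU.symm, hTV.symm, hUV.symm]

theorem AffinelyEquivalent.maximalCap {S T : Finset (Fin 4 → ZMod 3)}
    (h : AffinelyEquivalent S T) (hS : MaximalCap S) : MaximalCap T := by
  rw [maximalCap_iff] at hS ⊢
  exact ⟨h.isCap hS.1, h.card_eq ▸ hS.2⟩

theorem image_map_disjointCaps {e : (Fin 4 → ZMod 3) ≃ (Fin 4 → ZMod 3)} (he : IsCollineation e)
    (S : Finset (Fin 4 → ZMod 3)) :
    (disjointCaps S).image (Finset.map e.toEmbedding) = disjointCaps (S.map e.toEmbedding) := by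
  have map_mem {T} : T.map e.toEmbedding ∈ disjointCaps (S.map e.toEmbedding) ↔
      T ∈ disjointCaps S := by
    have hT := AffinelyEquivalent.map he T
    rw [mem_disjointCaps, mem_disjointCaps, disjoint_map]
    exact and_congr_left fun _ => ⟨hT.symm.maximalCap, hT.maximalCap⟩
  ext T
  obtain ⟨T, rfl⟩ := (Equiv.finsetCongr e).surjective T
  rw [Equiv.finsetCongr_apply, map_mem, (map_injective _).mem_finset_image]

theorem MaximalCap.exists_image_map_disjointCaps {S : Finset (Fin 4 → ZMod 3)}
    (hS : MaximalCap S) : ∃ e : (Fin 4 → ZMod 3) ↪ (Fin 4 → ZMod 3),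
      (disjointCaps S).image (Finset.map e) = disjointCaps ellipticCone := by
  obtain ⟨hcap, hcard⟩ := maximalCap_iff.1 hS
  obtain ⟨e, he, hSe⟩ := hcap.affinelyEquivalent_ellipticCone hcard
  have hmap : S.map e.toEmbedding = ellipticCone := by
    ext x
    rw [mem_map_equiv, hSe, e.apply_symm_apply]
  exact ⟨e.toEmbedding, hmap ▸ image_map_disjointCaps he S⟩

theorem MaximalCap.card_cliques_disjointCaps {S : Finset (Fin 4 → ZMod 3)} (hS : MaximalCap S) :
    #(cliques Disjoint 3 (disjointCaps S)) = 216 := by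
  obtain ⟨e, he⟩ := hS.exists_image_map_disjointCaps
  rw [← card_cliques_disjointCaps_ellipticCone, ← he,
    card_cliques_image (map_injective e).injOn fun _ _ _ _ => disjoint_map e]

theorem MaximalCap.exists_mem_cliques_disjointCaps {S : Finset (Fin 4 → ZMod 3)}
    (hS : MaximalCap S) :
    ∀ T ∈ disjointCaps S, ∃ t ∈ cliques Disjoint 3 (disjointCaps S), T ∈ t := by
  obtain ⟨e, he⟩ := hS.exists_image_map_disjointCaps
  rw [← forall_exists_mem_cliques_image (map_injective e).injOn fun _ _ _ _ => disjoint_map e, he]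
  exact exists_mem_cliques_disjointCaps_ellipticCone

end DisjointCaps

section CapPartitions

theorem isCapPartition_iff {P : Finset (Finset (Fin 4 → ZMod 3))} : IsCapPartition P ↔
    #P = 4 ∧ (∀ C ∈ P, MaximalCap C) ∧ (P : Set (Finset (Fin 4 → ZMod 3))).Pairwise Disjoint := by
  refine ⟨fun ⟨hcard, hmax, hdisj, _⟩ => ⟨hcard, hmax, fun C hC D hD => hdisj C hC D hD⟩, ?_⟩
  rintro ⟨hcard, hmax, hdisj⟩
  refine ⟨hcard, hmax, fun C hC D hD => hdisj hC hD, ?_⟩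
  have card_eq : ∀ C ∈ P, #(id C) = 20 := fun C hC => (maximalCap_iff.1 (hmax C hC)).2
  have card_union : #(P.sup id) = 80 := by
    rw [sup_eq_biUnion, card_biUnion (t := id) hdisj, sum_const_nat card_eq, hcard]
  obtain ⟨a, ha⟩ : ∃ a, (P.sup id)ᶜ = {a} := by
    rw [← card_eq_one, card_compl, card_union]
    rfl
  exact ⟨a, by rw [← compl_eq_univ_sdiff, ← ha, compl_compl]⟩

theorem isCapPartition_insert_iff {S : Finset (Fin 4 → ZMod 3)}
    {t : Finset (Finset (Fin 4 → ZMod 3))} (hS : MaximalCap S) (hSt : S ∉ t) :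
    IsCapPartition (insert S t) ↔ t ∈ cliques Disjoint 3 (disjointCaps S) := by
  have symm : Std.Symm (Disjoint : Finset (Fin 4 → ZMod 3) → _ → Prop) := ⟨fun _ _ h => h.symm⟩
  rw [isCapPartition_iff, mem_cliques, card_insert_of_notMem hSt, coe_insert,
    Set.pairwise_insert_of_symm_of_notMem (by exact hSt)]
  simp only [subset_iff, mem_disjointCaps, forall_mem_insert, mem_coe, forall₂_and, hS, true_and,
    Nat.reduceEqDiff, and_assoc, and_left_comm, and_comm]

theorem notMem_of_mem_cliques_disjointCaps {S : Finset (Fin 4 → ZMod 3)}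
    {t : Finset (Finset (Fin 4 → ZMod 3))} (hS : MaximalCap S)
    (ht : t ∈ cliques Disjoint 3 (disjointCaps S)) : S ∉ t := fun h =>
  hS.ne_of_disjoint (mem_disjointCaps.1 ((mem_cliques.1 ht).1 h)).2 rfl

theorem isCapPartition_and_mem_iff {S : Finset (Fin 4 → ZMod 3)}
    {P : Finset (Finset (Fin 4 → ZMod 3))} (hS : MaximalCap S) : IsCapPartition P ∧ S ∈ P ↔
      P ∈ (cliques Disjoint 3 (disjointCaps S)).image (insert S) := by
  rw [mem_image]
  constructor
  · rintro ⟨hP, hSP⟩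
    rw [← insert_erase hSP, isCapPartition_insert_iff hS (notMem_erase S P)] at hP
    exact ⟨_, hP, insert_erase hSP⟩
  · rintro ⟨t, ht, rfl⟩
    have hSt := notMem_of_mem_cliques_disjointCaps hS ht
    exact ⟨(isCapPartition_insert_iff hS hSt).2 ht, mem_insert_self S t⟩

theorem card_image_insert_cliques {S : Finset (Fin 4 → ZMod 3)} (hS : MaximalCap S) :
    #((cliques Disjoint 3 (disjointCaps S)).image (insert S)) = 216 := by
  rw [card_image_of_injOn, hS.card_cliques_disjointCaps]
  intro t ht u hu h
  rw [← erase_insert (notMem_of_mem_cliques_disjointCaps hS ht), h,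
    erase_insert (notMem_of_mem_cliques_disjointCaps hS hu)]

end CapPartitions

/-- Every maximal cap `S` in `AG(4,3)` lies in exactly 216 cap-partitions, and every
maximal cap disjoint from `S` occurs with `S` in at least one of them. -/
theorem card_cap_partitions_containing_maximal_cap_AG43
    (S : Finset (Fin 4 → ZMod 3)) (hS : MaximalCap S) :
    Nat.card {P : Finset (Finset (Fin 4 → ZMod 3)) // IsCapPartition P ∧ S ∈ P} = 216 ∧
    ∀ T : Finset (Fin 4 → ZMod 3), MaximalCap T → Disjoint S T →
      ∃ P : Finset (Finset (Fin 4 → ZMod 3)), IsCapPartition P ∧ S ∈ P ∧ T ∈ P := by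
  constructor
  · rw [Nat.subtype_card _ fun P => (isCapPartition_and_mem_iff hS).symm,
      card_image_insert_cliques hS]
  · intro T hT hST
    obtain ⟨t, ht, hTt⟩ :=
      hS.exists_mem_cliques_disjointCaps T (mem_disjointCaps.2 ⟨hT, hST⟩)
    obtain ⟨hP, hSP⟩ := (isCapPartition_and_mem_iff hS).2 (mem_image_of_mem (insert S) ht)
    exact ⟨insert S t, hP, hSP, mem_insert_of_mem hTt⟩
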